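/- arXiv:1801.00367 — 2 statements merged into one kernel-verified Lean document; each statement's English description precedes it below -/
import Mathlib

section
/- Let n ≥ 3 be an integer, let 0 < ℓ < min{(n−2)/2, 2} and let s ∈ (0,2) with s ≠ ℓ. Then there exist R > 0, a C¹ function K : (0,R) → ℝ with 0 < K(r) < 1 for all r ∈ (0,R) and lim_{r→0⁺} K(r) = 1, and a positive function u ∈ C²((0,R)) satisfying u''(r) + ((n−1)/r)·u'(r) + K(r)·r^{−s}·u(r)^{2*(s)−1} = 0 for all r ∈ (0,R), such that liminf_{r→0⁺} r^{(n−2)/2} u(r) = 0 and 0 < limsup_{r→0⁺} r^{(n−2)/2} u(r) < ∞; and moreover, setting L̲ := liminf_{r→0⁺} r^{1−ℓ}|K'(r)| and L̄ := limsup_{r→0⁺} r^{1−ℓ}|K'(r)|, one has L̲ = 0 and 0 < L̄ < ∞ if ℓ < s, while 0 < L̲ < ∞ and L̄ = ∞ if ℓ > s. -/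
/-!
Put `t = -log r`, `δ = (n - 2) / 2`, `p = 2*(s) - 1`, `u(r) = r ^ (-δ) w(t)` and `K(r) = k(t)`.
Because `2*(s)` is critical, the radial equation becomes the Emden–Fowler equation
`w'' = δ² w - k w ^ p`, in which `s` survives only through `p`. Moreover
`r ^ δ u(r) = w(t)` and `r ^ (1 - ℓ) |K'(r)| = exp (ℓ t) |k'(t)|`. So it is enough to exhibit an
increasing `k < 1` with limit `1` whose derivative has the prescribed behaviour, and a positive
bounded orbit `w` with `liminf w = 0 < limsup w`.

*The potential.* Take `k' = exp (-ℓ t) (1 + cos t)` if `ℓ < s`, and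
`k' = exp (-ℓ t) + exp (-ℓ t / 2) (1 + cos t)` if `ℓ > s`. Both satisfy
`k (t + 3) - k t ≥ c exp (-ℓ t)`, and this is all that the orbit construction needs
(`Potential`, `potential_of_lt`, `potential_of_gt`).

*The orbit.* The energy `E = w'² / 2 - δ² w² / 2 + k w ^ (p + 1) / (p + 1)` satisfies
`E' = k' w ^ (p + 1) / (p + 1) ≥ 0`, and solutions with `E ≤ 0` are positive and bounded by `M`. As
`k` increases to `1`, what `E` can still gain after time `t` is at most
`M ^ (p + 1) / (p + 1) * (1 - k t)`. Start at rest at time `t0` from height `h`. For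
`h = b` the energy is so negative that it stays negative forever (`Dips`), while for `h = M` it is
nonnegative at once. Dipping is an open condition, so the infimum `g` of the heights in `[b, ∞)`
that do not dip is not dipping, and it is a limit of dipping heights.

The critical orbit, from height `g`, has `E ≤ 0` and `E → 0`, which forces `liminf w = 0`
(`Setup.frequently_low`). If it stayed below `b` from some time on, it would decrease forever, and
dipping orbits nearby would decrease on an arbitrarily long interval `[t1, Ts]` and then climb
back to `b` at some time `T`. Since `w'' ≥ m² w` below `b`, where `ℓ < m < δ`, the minimum `w₀` in
between satisfies `w₀² ≤ C exp (-m (T - t1))`, hence `-E ≤ C exp (-m (T - t1))` there, with another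
constant `C`. But the bump at time `T` raises the energy by at least
`c' exp (-ℓ T)`, and the energy remains negative afterwards. As `ℓ < m`, this is impossible for `Ts`
large (`Setup.bump_estimate`). The hypothesis `ℓ < δ` enters exactly here, in the choice of
`m` between `ℓ` and `δ`.
-/

open Filter Set Real
open scoped Topology ENNReal

noncomputable section

/-- The critical Hardy–Sobolev exponent `2*(s) = 2(n-s)/(n-2)`. -/
def twoStarS (n : ℕ) (s : ℝ) : ℝ := 2 * ((n : ℝ) - s) / ((n : ℝ) - 2)

/-! ### Monotonicity, first zeros and global flows -/

lemma le_of_deriv_nonneg {f f' : ℝ → ℝ} {a b : ℝ} (hab : a ≤ b)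
    (hf : ∀ t ∈ Icc a b, HasDerivAt f (f' t) t) (h : ∀ t ∈ Ioo a b, 0 ≤ f' t) : f a ≤ f b := by
  have := monotoneOn_of_hasDerivWithinAt_nonneg (D := Icc a b) (f := f) (f' := f') (convex_Icc a b)
    (fun t ht => (hf t ht).continuousAt.continuousWithinAt)
    (fun t ht => (hf t (interior_subset ht)).hasDerivWithinAt)
    (fun t ht => h t (by rwa [interior_Icc] at ht))
  exact this (left_mem_Icc.2 hab) (right_mem_Icc.2 hab) hab

lemma exists_first_zero {f : ℝ → ℝ} (hf : Continuous f) {a b : ℝ} (hab : a ≤ b)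
    (ha : f a < 0) (hb : 0 ≤ f b) :
    ∃ τ ∈ Ioc a b, f τ = 0 ∧ ∀ t ∈ Ico a τ, f t < 0 := by
  set S : Set ℝ := Icc a b ∩ f ⁻¹' Ici 0 with hS
  have hSc : IsCompact S := isCompact_Icc.inter_right (isClosed_Ici.preimage hf)
  obtain ⟨τ, hτ⟩ := hSc.exists_isLeast ⟨b, right_mem_Icc.2 hab, hb⟩
  have hlt : ∀ t ∈ Ico a τ, f t < 0 := by
    intro t ht
    by_contra! hc
    exact absurd (hτ.2 ⟨⟨ht.1, ht.2.le.trans hτ.1.1.2⟩, hc⟩) (not_le.2 ht.2)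
  have haτ : a < τ := by
    rcases hτ.1.1.1.lt_or_eq with h | h
    · exact h
    · exact absurd hτ.1.2 (by rw [← h]; simpa using ha)
  refine ⟨τ, ⟨haτ, hτ.1.1.2⟩, le_antisymm ?_ hτ.1.2, hlt⟩
  have : τ ∈ closure (Ico a τ) := by
    rw [closure_Ico haτ.ne]; exact right_mem_Icc.2 haτ.le
  exact closure_minimal (fun t ht => (hlt t ht).le) (isClosed_Iic.preimage hf) this

/-- A vector field that is continuous in time, uniformly Lipschitz in space and bounded has a
global solution through every point: boundedness makes the Picard–Lindelöf theorem applicable on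
intervals of any length. -/
lemma exists_global_solution {E : Type*} [NormedAddCommGroup E] [NormedSpace ℝ E] [CompleteSpace E]
    {F : ℝ → E → E} {L K : NNReal} (hc : ∀ x, Continuous fun t => F t x)
    (hL : ∀ t x, ‖F t x‖ ≤ L) (hK : ∀ t, LipschitzWith K (F t)) (t0 : ℝ) (x0 : E) :
    ∃ z : ℝ → E, z t0 = x0 ∧ ∀ t, HasDerivAt z (F t (z t)) t := by
  have key : ∀ N : ℕ, ∃ z : ℝ → E, z t0 = x0 ∧
      ∀ t ∈ Ioo (t0 - (N + 1)) (t0 + (N + 1)), HasDerivAt z (F t (z t)) t := by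
    intro N
    have hN : (0 : ℝ) ≤ N + 1 := by positivity
    have hpl : IsPicardLindelof F (tmin := t0 - (N + 1)) (tmax := t0 + (N + 1))
        ⟨t0, by constructor <;> linarith⟩ x0 (L * (N + 1)) 0 L K :=
      { lipschitzOnWith := fun t _ => (hK t).lipschitzOnWith
        continuousOn := fun x _ => (hc x).continuousOn
        norm_le := fun t _ x _ => hL t x
        mul_max_le := by simp }
    obtain ⟨z, hz0, hz⟩ := hpl.exists_eq_forall_mem_Icc_hasDerivWithinAt₀
    exact ⟨z, hz0, fun t ht => (hz t (Ioo_subset_Icc_self ht)).hasDerivAt (Icc_mem_nhds ht.1 ht.2)⟩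
  choose α h0 hα using key
  have hagree : ∀ N M : ℕ, N ≤ M → EqOn (α N) (α M) (Ioo (t0 - (N + 1)) (t0 + (N + 1))) := by
    intro N M hNM
    have hNM' : (N : ℝ) ≤ M := by exact_mod_cast hNM
    have hN : (0 : ℝ) ≤ N := by positivity
    refine ODE_solution_unique_of_mem_Ioo (v := F) (s := fun _ => univ) (K := K) (t₀ := t0)
      (fun t _ => (hK t).lipschitzOnWith) ⟨by linarith, by linarith⟩
      (fun t ht => ⟨hα N t ht, mem_univ _⟩)
      (fun t ht => ⟨hα M t ⟨by linarith [ht.1], by linarith [ht.2]⟩, mem_univ _⟩) ?_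
    rw [h0, h0]
  set ν : ℝ → ℕ := fun t => ⌈|t - t0|⌉₊ with hν
  have hνm : ∀ t, ∀ N : ℕ, ν t ≤ N → t ∈ Ioo (t0 - (N + 1)) (t0 + (N + 1)) := by
    intro t N h
    have h1 : |t - t0| ≤ N := Nat.ceil_le.1 h
    have := abs_le.1 h1
    constructor <;> linarith
  refine ⟨fun t => α (ν t) t, h0 _, fun t => ?_⟩
  have hd := hα (ν t) t (hνm t _ le_rfl)
  have hev : (fun t => α (ν t) t) =ᶠ[𝓝 t] α (ν t) := by
    filter_upwards [isOpen_Ioo.mem_nhds (hνm t _ le_rfl)] with r hr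
    rcases le_total (ν r) (ν t) with h | h
    · exact hagree _ _ h (hνm r _ le_rfl)
    · exact (hagree _ _ h hr).symm
  exact hd.congr_of_eventuallyEq hev

/-- Joint continuity of the forward flow of a uniformly Lipschitz field, by Grönwall's inequality. -/
lemma continuous_flow {E : Type*} [NormedAddCommGroup E] [NormedSpace ℝ E]
    {F : ℝ → E → E} {K : NNReal} (hK : ∀ t, LipschitzWith K (F t)) {t0 : ℝ}
    {γ : ℝ → E} (hγ : Continuous γ) {Z : ℝ → ℝ → E} (h0 : ∀ c, Z c t0 = γ c)
    (hZ : ∀ c t, HasDerivAt (Z c) (F t (Z c t)) t) :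
    Continuous fun q : ℝ × ℝ => Z q.1 (max q.2 t0) := by
  have hcont : ∀ c, Continuous (Z c) := fun c =>
    continuous_iff_continuousAt.2 fun t => (hZ c t).continuousAt
  have hgr : ∀ c c' t, t0 ≤ t → dist (Z c t) (Z c' t) ≤ dist (γ c) (γ c') * exp (K * (t - t0)) := by
    intro c c' t ht
    refine dist_le_of_trajectories_ODE hK (hcont c).continuousOn
      (fun t _ => (hZ c t).hasDerivWithinAt) (hcont c').continuousOn
      (fun t _ => (hZ c' t).hasDerivWithinAt) (by rw [h0, h0]) t (right_mem_Icc.2 ht)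
  rw [continuous_iff_continuousAt]
  rintro ⟨c, s⟩
  rw [ContinuousAt, tendsto_iff_dist_tendsto_zero]
  have hlim : Tendsto (fun q : ℝ × ℝ => dist (γ q.1) (γ c) * exp (K * (max q.2 t0 - t0))
      + dist (Z c (max q.2 t0)) (Z c (max s t0))) (𝓝 (c, s)) (𝓝 0) := by
    have hcc : Continuous (fun q : ℝ × ℝ => dist (γ q.1) (γ c) * exp (K * (max q.2 t0 - t0))
      + dist (Z c (max q.2 t0)) (Z c (max s t0))) := by
      have := hcont c
      fun_prop
    have := hcc.tendsto (c, s)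
    simpa using this
  refine squeeze_zero (fun _ => dist_nonneg) (fun q => ?_) hlim
  exact (dist_triangle _ (Z c (max q.2 t0)) _).trans
    (add_le_add_left (hgr _ _ _ (le_max_right _ _)) _)

lemma exists_exp_gt {A κ m : ℝ} (a : ℝ) (hκ : 0 < κ) (hm : 0 < m) :
    ∃ T ≥ a, A < κ * exp (m * (T - a)) := by
  refine ⟨a + |A| / (κ * m), by simp; positivity, ?_⟩
  have h1 : m * (a + |A| / (κ * m) - a) = |A| / κ := by field_simp; ring
  rw [h1]
  have h2 := Real.add_one_le_exp (|A| / κ)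
  have h3 : κ * (|A| / κ + 1) ≤ κ * exp (|A| / κ) := by gcongr
  have h4 : κ * (|A| / κ + 1) = |A| + κ := by field_simp
  linarith [le_abs_self A]

/-! ### The truncated Emden–Fowler system and its energy -/

/-- The first-order system of `w'' = δ² w - k w ^ p`, truncated to `0 ≤ w ≤ M`, `|w'| ≤ δ M` and
`k ≥ 0` so as to be bounded and uniformly Lipschitz. -/
def truncField (δ p M : ℝ) (k : ℝ → ℝ) (t : ℝ) (z : ℝ × ℝ) : ℝ × ℝ :=
  (max (-(δ * M)) (min z.2 (δ * M)),
    δ ^ 2 * max 0 (min z.1 M) - max 0 (k t) * (max 0 (min z.1 M)) ^ p)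

/-- The energy `y²/2 - δ² x²/2 + κ x ^ (p + 1) / (p + 1)`. -/
def energy (δ p κ x y : ℝ) : ℝ := y ^ 2 / 2 - δ ^ 2 * x ^ 2 / 2 + κ * (x ^ (p + 1) / (p + 1))

/-- Standing assumptions on the coefficient `k` and on the constants of the construction:
`M` bounds the solutions of nonpositive energy, and `w'' ≥ m² w` holds as long as `0 < w ≤ b`.
The last condition makes the solution starting at rest from height `b` keep its energy negative. -/
structure Setup (δ p ℓ M m b c t0 : ℝ) (k k' : ℝ → ℝ) : Prop where
  hδ : 0 < δ
  hp : 1 < p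
  hℓ : 0 < ℓ
  hc : 0 < c
  hk : ∀ t, HasDerivAt k (k' t) t
  hk' : ∀ t, 0 ≤ k' t
  hk1 : ∀ t, k t < 1
  hlim : Tendsto k atTop (𝓝 1)
  hinc : ∀ t, k t + c * exp (-(ℓ * t)) ≤ k (t + 3)
  half : ∀ t, t0 ≤ t → 1 / 2 ≤ k t
  hM : 0 < M
  hMp : M ^ (p - 1) = (p + 1) * δ ^ 2
  hℓm : ℓ < m
  hmδ : m < δ
  hb : 0 < b
  hbp : b ^ (p - 1) = δ ^ 2 - m ^ 2
  start : M ^ (p + 1) / (p + 1) * (1 - k t0) < δ ^ 2 * b ^ 2 * (p - 1) / (2 * (p + 1))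

lemma rpow_add_one_eq {x p : ℝ} (hx : 0 < x) : x ^ (p + 1) = x ^ (p - 1) * x ^ 2 := by
  rw [← Real.rpow_natCast, ← Real.rpow_add hx]; congr 1; push_cast; ring

lemma rpow_eq_sub_one_mul {x p : ℝ} (hx : 0 < x) : x ^ p = x ^ (p - 1) * x := by
  rw [Real.rpow_sub_one hx.ne']; field_simp

lemma continuous_energy {α : Type*} [TopologicalSpace α] {δ p : ℝ} (hp : 1 < p) {κ x y : α → ℝ}
    (hκ : Continuous κ) (hx : Continuous x) (hy : Continuous y) :
    Continuous fun a => energy δ p (κ a) (x a) (y a) := by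
  have h : Continuous fun a => (x a) ^ (p + 1) :=
    (Real.continuous_rpow_const (by linarith)).comp hx
  unfold energy
  fun_prop

namespace Setup

variable {δ p ℓ M m b c t0 : ℝ} {k k' : ℝ → ℝ}

lemma m_pos (S : Setup δ p ℓ M m b c t0 k k') : 0 < m := S.hℓ.trans S.hℓm

lemma k_continuous (S : Setup δ p ℓ M m b c t0 k k') : Continuous k :=
  continuous_iff_continuousAt.2 fun t => (S.hk t).continuousAt

lemma b_le_M (S : Setup δ p ℓ M m b c t0 k k') : b ≤ M := by
  have h := S.hp
  rw [← Real.rpow_le_rpow_iff S.hb.le S.hM.le (by linarith : 0 < p - 1), S.hbp, S.hMp]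
  nlinarith [sq_nonneg m, sq_nonneg δ]

lemma abs_clamp_sub_le {a b x y : ℝ} : |max a (min x b) - max a (min y b)| ≤ |x - y| := by
  refine (abs_max_sub_max_le_max _ _ _ _).trans ?_
  refine max_le (by simp) ((abs_min_sub_min_le_max _ _ _ _).trans ?_)
  simp

lemma lipschitz (S : Setup δ p ℓ M m b c t0 k k') :
    ∃ K : NNReal, ∀ t, LipschitzWith K (truncField δ p M k t) := by
  have hp := S.hp
  have hM := S.hM
  set A : ℝ := p * M ^ (p - 1) with hA
  have hA0 : 0 ≤ A := by positivity
  have hpow : ∀ x ∈ Icc 0 M, ∀ y ∈ Icc 0 M, |y ^ p - x ^ p| ≤ A * |y - x| := by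
    intro x hx y hy
    refine Convex.norm_image_sub_le_of_norm_hasDerivWithin_le (f := fun x : ℝ => x ^ p)
      (f' := fun x => p * x ^ (p - 1)) (s := Icc 0 M) (C := A)
      (fun u _ => (Real.hasDerivAt_rpow_const (Or.inr hp.le)).hasDerivWithinAt)
      (fun u hu => ?_) (convex_Icc 0 M) hx hy
    have h0 : 0 ≤ u ^ (p - 1) := Real.rpow_nonneg hu.1 _
    rw [Real.norm_eq_abs, abs_of_nonneg (by positivity)]
    exact mul_le_mul_of_nonneg_left
      (Real.rpow_le_rpow hu.1 hu.2 (by linarith : 0 ≤ p - 1)) (by linarith)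
  refine ⟨⟨1 + δ ^ 2 + A, by positivity⟩, fun t => LipschitzWith.of_dist_le_mul ?_⟩
  rintro ⟨x, y⟩ ⟨x', y'⟩
  have hκ0 : 0 ≤ max 0 (k t) := le_max_left _ _
  have hκ1 : max 0 (k t) ≤ 1 := max_le zero_le_one (S.hk1 t).le
  have hmem : ∀ u : ℝ, max 0 (min u M) ∈ Icc 0 M :=
    fun u => ⟨le_max_left _ _, max_le hM.le (min_le_right _ _)⟩
  have hx : |x - x'| ≤ dist (x, y) (x', y') := by
    rw [Prod.dist_eq, ← Real.dist_eq]; exact le_max_left _ _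
  have hy : |y - y'| ≤ dist (x, y) (x', y') := by
    rw [Prod.dist_eq, ← Real.dist_eq]; exact le_max_right _ _
  set D := dist (x, y) (x', y')
  have hD : 0 ≤ D := dist_nonneg
  change _ ≤ (1 + δ ^ 2 + A) * D
  rw [Prod.dist_eq, Real.dist_eq, Real.dist_eq]
  simp only [truncField]
  refine max_le ?_ ?_
  · have h1 := abs_clamp_sub_le (a := -(δ * M)) (b := δ * M) (x := y) (y := y')
    nlinarith [mul_nonneg (sq_nonneg δ) hD, mul_nonneg hA0 hD]
  · have h1 := abs_clamp_sub_le (a := 0) (b := M) (x := x) (y := x')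
    have h2 := hpow _ (hmem x') _ (hmem x)
    set u := max 0 (min x M)
    set v := max 0 (min x' M)
    have h3 : δ ^ 2 * u - max 0 (k t) * u ^ p - (δ ^ 2 * v - max 0 (k t) * v ^ p)
        = δ ^ 2 * (u - v) - max 0 (k t) * (u ^ p - v ^ p) := by ring
    rw [h3]
    calc |δ ^ 2 * (u - v) - max 0 (k t) * (u ^ p - v ^ p)|
        ≤ |δ ^ 2 * (u - v)| + |max 0 (k t) * (u ^ p - v ^ p)| := abs_sub _ _
      _ = δ ^ 2 * |u - v| + max 0 (k t) * |u ^ p - v ^ p| := by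
          rw [abs_mul, abs_mul, abs_of_nonneg (sq_nonneg δ), abs_of_nonneg hκ0]
      _ ≤ δ ^ 2 * D + 1 * (A * D) := by
          have : |u - v| ≤ D := h1.trans hx
          gcongr
          exact h2.trans (by gcongr)
      _ ≤ (1 + δ ^ 2 + A) * D := by nlinarith

lemma bounded (S : Setup δ p ℓ M m b c t0 k k') :
    ∃ L : NNReal, ∀ t z, ‖truncField δ p M k t z‖ ≤ L := by
  have hp := S.hp
  have hM := S.hM
  have hδ := S.hδ
  refine ⟨⟨δ * M + δ ^ 2 * M + M ^ p, by positivity⟩, fun t z => ?_⟩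
  change _ ≤ δ * M + δ ^ 2 * M + M ^ p
  have hκ0 : 0 ≤ max 0 (k t) := le_max_left _ _
  have hκ1 : max 0 (k t) ≤ 1 := max_le zero_le_one (S.hk1 t).le
  have hu0 : 0 ≤ max 0 (min z.1 M) := le_max_left _ _
  have hu1 : max 0 (min z.1 M) ≤ M := max_le hM.le (min_le_right _ _)
  have hup0 : 0 ≤ (max 0 (min z.1 M)) ^ p := Real.rpow_nonneg hu0 _
  have hup : (max 0 (min z.1 M)) ^ p ≤ M ^ p := Real.rpow_le_rpow hu0 hu1 (by linarith)
  have h1 : 0 ≤ δ * M := by positivity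
  have h2 : 0 ≤ M ^ p := by positivity
  have h3 : 0 ≤ δ ^ 2 * M := by positivity
  rw [Prod.norm_def]
  simp only [truncField, Real.norm_eq_abs]
  refine max_le (abs_le.2 ⟨?_, ?_⟩) (abs_le.2 ⟨?_, ?_⟩)
  · have := le_max_left (-(δ * M)) (min z.2 (δ * M)); linarith
  · have : max (-(δ * M)) (min z.2 (δ * M)) ≤ δ * M := max_le (by linarith) (min_le_right _ _)
    linarith
  · have := mul_le_mul hκ1 hup hup0 zero_le_one
    have : 0 ≤ δ ^ 2 * max 0 (min z.1 M) := by positivity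
    linarith
  · have := mul_nonneg hκ0 hup0
    have : δ ^ 2 * max 0 (min z.1 M) ≤ δ ^ 2 * M := by gcongr
    linarith

lemma slope_and_height (S : Setup δ p ℓ M m b c t0 k k') {κ x y : ℝ} (hκ : 1 / 2 ≤ κ)
    (hx : 0 ≤ x) (hH : energy δ p κ x y ≤ 0) : |y| ≤ δ * x ∧ x ≤ M := by
  have hp := S.hp
  have hδ := S.hδ
  unfold energy at hH
  have h0 : 0 ≤ x ^ (p + 1) / (p + 1) := div_nonneg (Real.rpow_nonneg hx _) (by linarith)
  have h1 : 0 ≤ κ * (x ^ (p + 1) / (p + 1)) := mul_nonneg (by linarith) h0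
  constructor
  · rw [← abs_of_nonneg (by positivity : 0 ≤ δ * x)]
    apply sq_le_sq.1
    nlinarith
  · by_contra! hc
    have hx0 : 0 < x := S.hM.trans hc
    have h2 : M ^ (p - 1) < x ^ (p - 1) := Real.rpow_lt_rpow S.hM.le hc (by linarith)
    rw [S.hMp] at h2
    rw [rpow_add_one_eq hx0] at hH h0
    have h3 : δ ^ 2 * x ^ 2 < x ^ (p - 1) * x ^ 2 / (p + 1) := by
      rw [lt_div_iff₀ (by linarith)]
      have : 0 < x ^ 2 := by positivity
      nlinarith
    have h4 : 1 / 2 * (x ^ (p - 1) * x ^ 2 / (p + 1)) ≤ κ * (x ^ (p - 1) * x ^ 2 / (p + 1)) :=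
      mul_le_mul_of_nonneg_right hκ h0
    nlinarith [sq_nonneg y]

end Setup

/-- At time `t` the pair `(x, y)` obeys the untruncated system `x' = y`, `y' = δ² x - k x ^ p`,
with `x` positive and the energy nonpositive, together with the resulting a priori bounds. -/
structure GoodAt (δ p M : ℝ) (k k' x y : ℝ → ℝ) (t : ℝ) : Prop where
  pos : 0 < x t
  le : x t ≤ M
  slope : |y t| ≤ δ * x t
  neg : energy δ p (k t) (x t) (y t) ≤ 0
  dx : HasDerivAt x (y t) t
  dy : HasDerivAt y (δ ^ 2 * x t - k t * x t ^ p) t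
  dH : HasDerivAt (fun t => energy δ p (k t) (x t) (y t)) (k' t * (x t ^ (p + 1) / (p + 1))) t

namespace Setup

variable {δ p ℓ M m b c t0 : ℝ} {k k' : ℝ → ℝ}

lemma goodAt_of_pos (S : Setup δ p ℓ M m b c t0 k k') {z : ℝ → ℝ × ℝ} {t : ℝ}
    (hz : HasDerivAt z (truncField δ p M k t (z t)) t) (ht : t0 ≤ t)
    (hpos : 0 < (z t).1) (hH : energy δ p (k t) (z t).1 (z t).2 ≤ 0) :
    GoodAt δ p M k k' (fun t => (z t).1) (fun t => (z t).2) t := by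
  have hp := S.hp
  have hδ := S.hδ
  have hhalf := S.half t ht
  obtain ⟨hs, hle⟩ := S.slope_and_height hhalf hpos.le hH
  have hy := abs_le.1 hs
  have hδM : δ * (z t).1 ≤ δ * M := by gcongr
  have hv : truncField δ p M k t (z t) = ((z t).2, δ ^ 2 * (z t).1 - k t * (z t).1 ^ p) := by
    unfold truncField
    rw [min_eq_left hle, max_eq_right hpos.le, min_eq_left (by linarith),
      max_eq_right (by linarith), max_eq_right (by linarith)]
  rw [hv] at hz
  have hdx : HasDerivAt (fun t => (z t).1) (z t).2 t := hz.fst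
  have hdy : HasDerivAt (fun t => (z t).2) (δ ^ 2 * (z t).1 - k t * (z t).1 ^ p) t := hz.snd
  refine ⟨hpos, hle, hs, hH, hdx, hdy, ?_⟩
  have hpow : HasDerivAt (fun t => (z t).1 ^ (p + 1) / (p + 1)) ((z t).1 ^ p * (z t).2) t := by
    have := (hdx.rpow_const (p := p + 1) (Or.inl hpos.ne')).div_const (p + 1)
    refine this.congr_deriv ?_
    rw [add_sub_cancel_right]
    field_simp
  have := (((hdy.pow 2).div_const 2).sub (((hdx.pow 2).const_mul (δ ^ 2)).div_const 2)).add
    ((S.hk t).mul hpow)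
  refine HasDerivAt.congr_deriv (f := fun t => energy δ p (k t) (z t).1 (z t).2) this ?_
  push_cast
  ring

lemma good_of_energy_nonpos (S : Setup δ p ℓ M m b c t0 k k') {z : ℝ → ℝ × ℝ}
    (hz : ∀ t, HasDerivAt z (truncField δ p M k t (z t)) t) (h0 : 0 < (z t0).1) {T : ℝ}
    (hH : ∀ t ∈ Icc t0 T, energy δ p (k t) (z t).1 (z t).2 ≤ 0) :
    ∀ t ∈ Icc t0 T, GoodAt δ p M k k' (fun t => (z t).1) (fun t => (z t).2) t := by
  have hzc : Continuous z := continuous_iff_continuousAt.2 fun t => (hz t).continuousAt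
  intro t ht
  refine S.goodAt_of_pos (hz t) ht.1 ?_ (hH t ht)
  by_contra! hneg
  -- At the first zero `τ` of `x` the bound `x' ≥ -δ x` on `[t0, τ)` gives a contradiction.
  obtain ⟨τ, hτ, hτ0, hτlt⟩ := exists_first_zero (f := fun t => -(z t).1) (by fun_prop) ht.1
    (by simpa using h0) (by simpa using hneg)
  have hg : ∀ s ∈ Ico t0 τ, GoodAt δ p M k k' (fun t => (z t).1) (fun t => (z t).2) s :=
    fun s hs => S.goodAt_of_pos (hz s) hs.1 (by simpa using hτlt s hs)
      (hH s ⟨hs.1, hs.2.le.trans (hτ.2.trans ht.2)⟩)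
  have hmono : ∀ s ∈ Ico t0 τ, (z t0).1 * exp (δ * t0) ≤ (z s).1 * exp (δ * s) := by
    intro s hs
    refine le_of_deriv_nonneg (f := fun s => (z s).1 * exp (δ * s))
      (f' := fun s => (z s).2 * exp (δ * s) + (z s).1 * (exp (δ * s) * (δ * 1))) hs.1
      (fun r hr => ?_) (fun r hr => ?_)
    · exact (hg r ⟨hr.1, hr.2.trans_lt hs.2⟩).dx.mul (((hasDerivAt_id r).const_mul δ).exp)
    · have h1 := (abs_le.1 (hg r ⟨hr.1.le, hr.2.trans hs.2⟩).slope).1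
      have h2 := exp_pos (δ * r)
      have : 0 ≤ ((z r).2 + δ * (z r).1) * exp (δ * r) := mul_nonneg (by linarith) h2.le
      nlinarith
  have hcl : (z t0).1 * exp (δ * t0) ≤ (z τ).1 * exp (δ * τ) := by
    have hmem : τ ∈ closure (Ico t0 τ) := by
      rw [closure_Ico hτ.1.ne]; exact right_mem_Icc.2 hτ.1.le
    have hcf : Continuous fun s => (z s).1 * exp (δ * s) := by fun_prop
    exact closure_minimal (fun s hs => hmono s hs) (isClosed_Ici.preimage hcf) hmem
  have hz0 : (z τ).1 = 0 := by simpa using hτ0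
  rw [hz0, zero_mul] at hcl
  exact absurd hcl (not_le.2 (mul_pos h0 (exp_pos _)))

section Good

variable {x y : ℝ → ℝ} {a T : ℝ}

lemma energy_mono (S : Setup δ p ℓ M m b c t0 k k') (haT : a ≤ T)
    (hg : ∀ t ∈ Icc a T, GoodAt δ p M k k' x y t) :
    energy δ p (k a) (x a) (y a) ≤ energy δ p (k T) (x T) (y T) := by
  refine le_of_deriv_nonneg haT (fun t ht => (hg t ht).dH) (fun t ht => ?_)
  have hp := S.hp
  exact mul_nonneg (S.hk' t) (div_nonneg
    (Real.rpow_nonneg (hg t (Ioo_subset_Icc_self ht)).pos.le _) (by linarith))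

lemma energy_sub_le (S : Setup δ p ℓ M m b c t0 k k') (haT : a ≤ T)
    (hg : ∀ t ∈ Icc a T, GoodAt δ p M k k' x y t) :
    energy δ p (k T) (x T) (y T)
      ≤ energy δ p (k a) (x a) (y a) + M ^ (p + 1) / (p + 1) * (k T - k a) := by
  have hp := S.hp
  have := le_of_deriv_nonneg
    (f := fun t => M ^ (p + 1) / (p + 1) * k t - energy δ p (k t) (x t) (y t)) haT
    (fun t ht => ((S.hk t).const_mul _).sub (hg t ht).dH) (fun t ht => ?_)
  · linarith
  · have hgt := hg t (Ioo_subset_Icc_self ht)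
    have h1 : x t ^ (p + 1) ≤ M ^ (p + 1) := Real.rpow_le_rpow hgt.pos.le hgt.le (by linarith)
    have h2 : x t ^ (p + 1) / (p + 1) ≤ M ^ (p + 1) / (p + 1) :=
      div_le_div_of_nonneg_right h1 (by linarith)
    nlinarith [mul_le_mul_of_nonneg_left h2 (S.hk' t)]

lemma harnack (haT : a ≤ T)
    (hg : ∀ t ∈ Icc a T, GoodAt δ p M k k' x y t) : x a * exp (-(δ * (T - a))) ≤ x T := by
  have := le_of_deriv_nonneg (f := fun s => x s * exp (δ * s))
      (f' := fun s => y s * exp (δ * s) + x s * (exp (δ * s) * (δ * 1))) haT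
      (fun r hr => (hg r hr).dx.mul (((hasDerivAt_id r).const_mul δ).exp)) (fun r hr => ?_)
  · have h1 : x a * exp (-(δ * (T - a))) = x a * exp (δ * a) * exp (-(δ * T)) := by
      rw [mul_assoc, ← exp_add]; ring_nf
    have h2 : x T = x T * exp (δ * T) * exp (-(δ * T)) := by
      rw [mul_assoc, ← exp_add]; simp
    rw [h1, h2]
    exact mul_le_mul_of_nonneg_right this (exp_pos _).le
  · have h1 := (abs_le.1 (hg r (Ioo_subset_Icc_self hr)).slope).1
    have h2 := exp_pos (δ * r)
    have : 0 ≤ (y r + δ * x r) * exp (δ * r) := mul_nonneg (by linarith) h2.le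
    nlinarith

/-- Over three units of time a solution of height `x a` gains energy at least of order
`exp (-ℓ a)`. -/
lemma energy_gain (S : Setup δ p ℓ M m b c t0 k k')
    (hg : ∀ t ∈ Icc a (a + 3), GoodAt δ p M k k' x y t) :
    energy δ p (k a) (x a) (y a)
      + (x a * exp (-(δ * 3))) ^ (p + 1) / (p + 1) * (c * exp (-(ℓ * a)))
      ≤ energy δ p (k (a + 3)) (x (a + 3)) (y (a + 3)) := by
  have hp := S.hp
  have hδ := S.hδ
  have ha3 : a ≤ a + 3 := by linarith
  have hxa := (hg a (left_mem_Icc.2 ha3)).pos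
  set A := (x a * exp (-(δ * 3))) ^ (p + 1) / (p + 1) with hA
  have hA0 : 0 ≤ A := by positivity
  have := le_of_deriv_nonneg
    (f := fun t => energy δ p (k t) (x t) (y t) - A * k t) ha3
    (fun t ht => (hg t ht).dH.sub ((S.hk t).const_mul _)) (fun t ht => ?_)
  · have h2 := mul_le_mul_of_nonneg_left (S.hinc a) hA0
    linarith
  · have h1 := harnack ht.1.le (fun s hs => hg s ⟨hs.1, hs.2.trans ht.2.le⟩)
    have h2 : x a * exp (-(δ * 3)) ≤ x t := by
      refine le_trans ?_ h1
      have := ht.2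
      gcongr
      linarith
    have h3 : A ≤ x t ^ (p + 1) / (p + 1) := div_le_div_of_nonneg_right
      (Real.rpow_le_rpow (by positivity) h2 (by linarith)) (by linarith)
    nlinarith [mul_le_mul_of_nonneg_left h3 (S.hk' t)]

lemma convex_low (S : Setup δ p ℓ M m b c t0 k k') {t : ℝ} (hg : GoodAt δ p M k k' x y t)
    (hb : x t ≤ b) : m ^ 2 * x t ≤ δ ^ 2 * x t - k t * x t ^ p := by
  have hp := S.hp
  have h1 : x t ^ (p - 1) ≤ δ ^ 2 - m ^ 2 := by
    rw [← S.hbp]; exact Real.rpow_le_rpow hg.pos.le hb (by linarith)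
  have h2 : x t ^ p ≤ (δ ^ 2 - m ^ 2) * x t := by
    rw [rpow_eq_sub_one_mul hg.pos]; exact mul_le_mul_of_nonneg_right h1 hg.pos.le
  have h3 : k t * x t ^ p ≤ x t ^ p :=
    mul_le_of_le_one_left (Real.rpow_nonneg hg.pos.le _) (S.hk1 t).le
  linarith

/-- Below height `b`, a solution that is not decreasing grows like `exp (m t)`. -/
lemma growth (S : Setup δ p ℓ M m b c t0 k k') (haT : a ≤ T)
    (hg : ∀ t ∈ Icc a T, GoodAt δ p M k k' x y t) (hb : ∀ t ∈ Ico a T, x t ≤ b)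
    (hya : 0 ≤ y a) : m * x a * exp (m * (T - a)) ≤ (δ + m) * x T := by
  have hm := S.m_pos
  have := le_of_deriv_nonneg (f := fun t => (y t + m * x t) * exp (-(m * t)))
    (f' := fun t => (δ ^ 2 * x t - k t * x t ^ p + m * y t) * exp (-(m * t))
      + (y t + m * x t) * (exp (-(m * t)) * -(m * 1))) haT
    (fun t ht => ((hg t ht).dy.add ((hg t ht).dx.const_mul m)).mul
      ((((hasDerivAt_id t).const_mul m).neg).exp)) (fun t ht => ?_)
  · have hgT := hg T (right_mem_Icc.2 haT)
    have h1 : y T + m * x T ≤ (δ + m) * x T := by linarith [(abs_le.1 hgT.slope).2]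
    have h2 : m * x a * exp (-(m * a)) ≤ (y T + m * x T) * exp (-(m * T)) := by
      refine le_trans ?_ this
      gcongr
      linarith
    have h3 : m * x a * exp (m * (T - a)) = m * x a * exp (-(m * a)) * exp (m * T) := by
      rw [mul_assoc _ (exp _) (exp _), ← exp_add]; ring_nf
    have h4 : (y T + m * x T) * exp (-(m * T)) * exp (m * T) = y T + m * x T := by
      rw [mul_assoc, ← exp_add]; simp
    rw [h3]
    refine le_trans ?_ h1
    rw [← h4]
    gcongr
  · have h1 := S.convex_low (hg t (Ioo_subset_Icc_self ht)) (hb t (Ioo_subset_Ico_self ht))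
    have h2 := exp_pos (-(m * t))
    have : 0 ≤ (δ ^ 2 * x t - k t * x t ^ p - m ^ 2 * x t) * exp (-(m * t)) :=
      mul_nonneg (by linarith) h2.le
    nlinarith

/-- Time-reversed form of `growth`. -/
lemma decay (S : Setup δ p ℓ M m b c t0 k k') (haT : a ≤ T)
    (hg : ∀ t ∈ Icc a T, GoodAt δ p M k k' x y t) (hb : ∀ t ∈ Icc a T, x t ≤ b)
    (hyT : y T ≤ 0) : m * x T * exp (m * (T - a)) ≤ (δ + m) * x a := by
  have hm := S.m_pos
  have := le_of_deriv_nonneg (f := fun t => (y t - m * x t) * exp (m * t))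
    (f' := fun t => (δ ^ 2 * x t - k t * x t ^ p - m * y t) * exp (m * t)
      + (y t - m * x t) * (exp (m * t) * (m * 1))) haT
    (fun t ht => ((hg t ht).dy.sub ((hg t ht).dx.const_mul m)).mul
      ((((hasDerivAt_id t).const_mul m)).exp)) (fun t ht => ?_)
  · have hga := hg a (left_mem_Icc.2 haT)
    have h1 : m * x a - y a ≤ (δ + m) * x a := by linarith [(abs_le.1 hga.slope).1]
    have h2 : m * x T * exp (m * T) ≤ (m * x a - y a) * exp (m * a) := by
      have : 0 ≤ (-y T) * exp (m * T) := mul_nonneg (by linarith) (exp_pos _).le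
      nlinarith
    have h3 : m * x T * exp (m * (T - a)) = m * x T * exp (m * T) * exp (-(m * a)) := by
      rw [mul_assoc _ (exp _) (exp _), ← exp_add]; ring_nf
    have h4 : (m * x a - y a) * exp (m * a) * exp (-(m * a)) = m * x a - y a := by
      rw [mul_assoc, ← exp_add]; simp
    rw [h3]
    refine le_trans ?_ h1
    rw [← h4]
    gcongr
  · have h1 := S.convex_low (hg t (Ioo_subset_Icc_self ht)) (hb t (Ioo_subset_Icc_self ht))
    have h2 := exp_pos (m * t)
    have : 0 ≤ (δ ^ 2 * x t - k t * x t ^ p - m ^ 2 * x t) * exp (m * t) :=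
      mul_nonneg (by linarith) h2.le
    nlinarith

end Good

end Setup

/-! ### Shooting -/

/-- The energy becomes so negative that the remaining increase of `k` to its limit `1` can no
longer bring it back to `0`. This is an open condition on the orbit. -/
def Dips (δ p M : ℝ) (k : ℝ → ℝ) (t0 : ℝ) (z : ℝ → ℝ × ℝ) : Prop :=
  ∃ t ≥ t0, (∀ τ ∈ Icc t0 t, energy δ p (k τ) (z τ).1 (z τ).2 < 0) ∧
    energy δ p (k t) (z t).1 (z t).2 + M ^ (p + 1) / (p + 1) * (1 - k t) < 0

namespace Setup

variable {δ p ℓ M m b c t0 : ℝ} {k k' : ℝ → ℝ}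

lemma continuous_energy_orbit (S : Setup δ p ℓ M m b c t0 k k') {z : ℝ → ℝ × ℝ}
    (hz : ∀ t, HasDerivAt z (truncField δ p M k t (z t)) t) :
    Continuous fun t => energy δ p (k t) (z t).1 (z t).2 := by
  have hzc : Continuous z := continuous_iff_continuousAt.2 fun t => (hz t).continuousAt
  exact continuous_energy S.hp S.k_continuous (by fun_prop) (by fun_prop)

lemma energy_of_dips (S : Setup δ p ℓ M m b c t0 k k') {z : ℝ → ℝ × ℝ}
    (hz : ∀ t, HasDerivAt z (truncField δ p M k t (z t)) t) (h0 : 0 < (z t0).1)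
    (hd : Dips δ p M k t0 z) :
    (∀ t ≥ t0, energy δ p (k t) (z t).1 (z t).2 < 0) ∧
    ∃ η > 0, ∃ t2 ≥ t0, ∀ t ≥ t2, energy δ p (k t) (z t).1 (z t).2 ≤ -η := by
  obtain ⟨t2, ht2, hneg, hdip⟩ := hd
  have hp := S.hp
  have hM := S.hM
  have hC : 0 < M ^ (p + 1) / (p + 1) := by positivity
  have hstep : ∀ t ≥ t2, (∀ s ∈ Icc t0 t, energy δ p (k s) (z s).1 (z s).2 ≤ 0) →
      energy δ p (k t) (z t).1 (z t).2
        ≤ energy δ p (k t2) (z t2).1 (z t2).2 + M ^ (p + 1) / (p + 1) * (1 - k t2) := by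
    intro t ht hs
    have hg := S.good_of_energy_nonpos hz h0 hs
    refine (S.energy_sub_le ht fun s hs => hg s ⟨ht2.trans hs.1, hs.2⟩).trans ?_
    have := (S.hk1 t).le
    gcongr
  have hall : ∀ t ≥ t0, energy δ p (k t) (z t).1 (z t).2 < 0 := by
    intro t ht
    by_contra! hc
    have ht2t : t2 ≤ t := by
      by_contra! h
      exact absurd (hneg t ⟨ht, h.le⟩) (not_lt.2 hc)
    obtain ⟨τ, hτ, hτ0, hτlt⟩ := exists_first_zero (S.continuous_energy_orbit hz) ht2t
      (hneg t2 ⟨ht2, le_rfl⟩) hc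
    have := hstep τ hτ.1.le (fun s hs => by
      rcases le_total s t2 with h | h
      · exact (hneg s ⟨hs.1, h⟩).le
      · rcases hs.2.lt_or_eq with h' | h'
        · exact (hτlt s ⟨h, h'⟩).le
        · rw [h']; exact hτ0.le)
    linarith
  refine ⟨hall, -(energy δ p (k t2) (z t2).1 (z t2).2 + M ^ (p + 1) / (p + 1) * (1 - k t2)),
    by linarith, t2, ht2, fun t ht => ?_⟩
  rw [neg_neg]
  exact hstep t ht fun s hs => (hall s hs.1).le

/-- A solution whose energy stays away from `0` and which decreases throughout `[t1, Ts]` from a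
height below `b` reaches a positive minimum after `Ts` and climbs back to `b` at some later
time `T`. The depth of the minimum is at most `exp (-m (T - t1) / 2)` up to a constant, while the
energy gained in the following bump, at least of order `exp (-ℓ T)`, must not exceed the
square of that depth. -/
lemma bump_estimate (S : Setup δ p ℓ M m b c t0 k k') {x y : ℝ → ℝ} {t1 Ts η t2 : ℝ}
    (ht1 : t0 ≤ t1) (hTs : t1 ≤ Ts) (hg : ∀ t ≥ t0, GoodAt δ p M k k' x y t)
    (hx : Continuous x) (hy : Continuous y)
    (hη : 0 < η) (hE : ∀ t ≥ t2, energy δ p (k t) (x t) (y t) ≤ -η)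
    (hx1 : x t1 < b) (hyneg : ∀ t ∈ Icc t1 Ts, y t < 0) :
    ∃ T ≥ Ts, (b * exp (-(δ * 3))) ^ (p + 1) / (p + 1) * (c * exp (-(ℓ * T)))
      ≤ δ ^ 2 / 2 * ((δ + m) * b / m) ^ 2 * exp (-(m * (T - t1))) := by
  have hm := S.m_pos
  have hδ := S.hδ
  have hp := S.hp
  have hb := S.hb
  have hdecr : ∀ s ≥ t1, (∀ r ∈ Ico t1 s, y r < 0) → x s < b := by
    intro s hs hr
    refine lt_of_le_of_lt ?_ hx1
    have := le_of_deriv_nonneg (f := fun t => - x t) (f' := fun t => - y t) hs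
      (fun t ht => (hg t (ht1.trans ht.1)).dx.neg)
      (fun t ht => by have := hr t ⟨ht.1.le, ht.2⟩; linarith)
    linarith
  -- The derivative vanishes somewhere: otherwise `x` stays away from `0`, as the energy does,
  -- and `x'' ≥ m² x` forces `x'` to become positive.
  have hturn : ∃ t ≥ t1, 0 ≤ y t := by
    by_contra! hc
    set a := max t1 t2
    have ha1 : t1 ≤ a := le_max_left _ _
    have hω : ∀ t ≥ a, 2 * η / δ ^ 2 ≤ x t ^ 2 := by
      intro t ht
      have hgt := hg t (ht1.trans (ha1.trans ht))
      have h1 := hE t ((le_max_right t1 t2).trans ht)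
      unfold energy at h1
      have h2 : 0 ≤ k t * (x t ^ (p + 1) / (p + 1)) := mul_nonneg
        (by linarith [S.half t (ht1.trans (ha1.trans ht))])
        (div_nonneg (Real.rpow_nonneg hgt.pos.le _) (by linarith))
      rw [div_le_iff₀ (by positivity)]
      nlinarith [sq_nonneg (y t)]
    set ω := √(2 * η / δ ^ 2) with hωdef
    have hω0 : 0 < ω := Real.sqrt_pos.2 (by positivity)
    have hωx : ∀ t ≥ a, ω ≤ x t := fun t ht =>
      Real.sqrt_le_iff.2 ⟨(hg t (ht1.trans (ha1.trans ht))).pos.le, hω t ht⟩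
    have hs0 : 0 ≤ -y a / (m ^ 2 * ω) := by
      have := hc a ha1
      have : 0 ≤ -y a := by linarith
      positivity
    set s := a + -y a / (m ^ 2 * ω) with hs
    have has : a ≤ s := by linarith
    have := le_of_deriv_nonneg (f := fun t => y t - m ^ 2 * ω * t) has
      (fun t ht => (hg t (ht1.trans (ha1.trans ht.1))).dy.sub
        ((hasDerivAt_id t).const_mul (m ^ 2 * ω))) (fun t ht => by
        have h1 := S.convex_low (hg t (ht1.trans (ha1.trans ht.1.le)))
          (hdecr t (ha1.trans ht.1.le) fun r hr => hc r hr.1).le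
        have h2 := mul_le_mul_of_nonneg_left (hωx t ht.1.le) (sq_nonneg m)
        linarith)
    have h3 : m ^ 2 * ω * s = m ^ 2 * ω * a - y a := by rw [hs]; field_simp; ring
    have h4 := hc s (ha1.trans has)
    linarith
  obtain ⟨t3, ht3, hyt3⟩ := hturn
  obtain ⟨τ, hτ, hyτ, hylt⟩ := exists_first_zero hy ht3 (hyneg t1 ⟨le_rfl, hTs⟩) hyt3
  have hTsτ : Ts ≤ τ := by
    by_contra! h
    have := hyneg τ ⟨hτ.1.le, h.le⟩
    linarith
  have ht0τ : t0 ≤ τ := ht1.trans hτ.1.le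
  have hxτ : x τ < b := hdecr τ hτ.1.le hylt
  have hετ := (hg τ ht0τ).pos
  obtain ⟨T1, hT1, hT1b⟩ : ∃ T ≥ τ, b ≤ x T := by
    by_contra! hc
    obtain ⟨T, hT, hTb⟩ := exists_exp_gt (A := (δ + m) * b) τ (mul_pos hm hετ) hm
    have h1 := S.growth hT (fun t ht => hg t (ht0τ.trans ht.1)) (fun t ht => (hc t ht.1).le) hyτ.ge
    have h2 : (δ + m) * x T ≤ (δ + m) * b := by
      have := (hc T hT).le
      gcongr
    linarith
  obtain ⟨T, hT, hxT, hxlt⟩ := exists_first_zero (f := fun t => x t - b) (by fun_prop) hT1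
    (by linarith) (by linarith)
  have hxTb : x T = b := by linarith
  have ht0T : t0 ≤ T := ht0τ.trans hT.1.le
  have hup := S.growth hT.1.le (fun t ht => hg t (ht0τ.trans ht.1))
    (fun t ht => by have := hxlt t ht; linarith) hyτ.ge
  have hdown := S.decay hτ.1.le (fun t ht => hg t (ht1.trans ht.1))
    (fun t ht => (hdecr t ht.1 fun r hr => hylt r ⟨hr.1, hr.2.trans_le ht.2⟩).le) hyτ.le
  refine ⟨T, hTsτ.trans hT.1.le, ?_⟩
  have hgain := S.energy_gain (a := T) fun t ht => hg t (ht0T.trans ht.1)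
  have hneg := (hg (T + 3) (by linarith)).neg
  have hmono := S.energy_mono hT.1.le fun t ht => hg t (ht0τ.trans ht.1)
  have hEτ : -(δ ^ 2 * x τ ^ 2 / 2) ≤ energy δ p (k τ) (x τ) (y τ) := by
    unfold energy
    have h2 : 0 ≤ k τ * (x τ ^ (p + 1) / (p + 1)) := mul_nonneg
        (by linarith [S.half τ ht0τ]) (div_nonneg (Real.rpow_nonneg hετ.le _) (by linarith))
    nlinarith [sq_nonneg (y τ)]
  rw [hxTb] at hgain hup
  have hmain : (b * exp (-(δ * 3))) ^ (p + 1) / (p + 1) * (c * exp (-(ℓ * T)))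
      ≤ δ ^ 2 / 2 * x τ ^ 2 := by
    rw [hxTb] at hmono
    linarith
  refine hmain.trans ?_
  rw [mul_assoc]
  refine mul_le_mul_of_nonneg_left ?_ (by positivity)
  have hprod : (m * x τ * exp (m * (T - τ))) * (m * x τ * exp (m * (τ - t1)))
      ≤ ((δ + m) * b) * ((δ + m) * b) := by
    refine mul_le_mul hup (hdown.trans ?_) (by positivity) (by positivity)
    gcongr
  have hexp : exp (m * (T - τ)) * exp (m * (τ - t1)) * exp (-(m * (T - t1))) = 1 := by
    rw [← exp_add, ← exp_add, ← exp_zero]; ring_nf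
  have h5 : x τ ^ 2 = (m * x τ * exp (m * (T - τ))) * (m * x τ * exp (m * (τ - t1)))
      * exp (-(m * (T - t1))) / m ^ 2 := by
    have : (m * x τ * exp (m * (T - τ))) * (m * x τ * exp (m * (τ - t1)))
      * exp (-(m * (T - t1))) = m ^ 2 * x τ ^ 2 *
        (exp (m * (T - τ)) * exp (m * (τ - t1)) * exp (-(m * (T - t1)))) := by ring
    rw [this, hexp]; field_simp
  have h6 : ((δ + m) * b / m) ^ 2 * exp (-(m * (T - t1)))
      = ((δ + m) * b) * ((δ + m) * b) * exp (-(m * (T - t1))) / m ^ 2 := by ring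
  rw [h5, h6]
  gcongr

/-- An orbit of energy tending to `0` cannot stay away from height `0`: otherwise `y / x` would
decrease at a uniform rate, although it is bounded by `δ`. -/
lemma frequently_low (S : Setup δ p ℓ M m b c t0 k k') {x y : ℝ → ℝ}
    (hg : ∀ t ≥ t0, GoodAt δ p M k k' x y t)
    (hE : ∀ t ≥ t0, 0 ≤ energy δ p (k t) (x t) (y t) + M ^ (p + 1) / (p + 1) * (1 - k t))
    {ε : ℝ} (hε : 0 < ε) (t1 : ℝ) : ∃ t ≥ t1, x t ≤ ε := by
  by_contra! hc
  have hp := S.hp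
  have hM := S.hM
  have hδ := S.hδ
  have hp1 : 0 < p - 1 := by linarith
  set C := M ^ (p + 1) / (p + 1) with hC
  have hC0 : 0 < C := by positivity
  set ρ := ε ^ (p - 1) * (p - 1) / (4 * (p + 1)) with hρ
  have hρ0 : 0 < ρ := by positivity
  have hlim : Tendsto (fun t => 2 * C * (1 - k t)) atTop (𝓝 0) := by
    have := (S.hlim.const_sub 1).const_mul (2 * C)
    simpa using this
  obtain ⟨t3, ht3⟩ := eventually_atTop.1
    (hlim.eventually (gt_mem_nhds (by positivity : (0 : ℝ) < ρ * ε ^ 2)))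
  set a := max t0 (max t1 t3)
  have ha0 : t0 ≤ a := le_max_left _ _
  have ha1 : t1 ≤ a := (le_max_left _ _).trans (le_max_right _ _)
  have ha3 : t3 ≤ a := (le_max_right _ _).trans (le_max_right _ _)
  have hT : a ≤ a + (2 * δ + 1) / ρ := by
    have : 0 < (2 * δ + 1) / ρ := by positivity
    linarith
  have hq : ∀ t ≥ a, |y t / x t| ≤ δ := by
    intro t ht
    have hgt := hg t (ha0.trans ht)
    rw [abs_div, abs_of_pos hgt.pos, div_le_iff₀ hgt.pos]
    exact hgt.slope
  have := le_of_deriv_nonneg (f := fun t => -(y t / x t) - ρ * t) hT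
    (fun t ht => ((hg t (ha0.trans ht.1)).dy.div (hg t (ha0.trans ht.1)).dx
      (hg t (ha0.trans ht.1)).pos.ne').neg.sub ((hasDerivAt_id t).const_mul ρ))
    (fun t ht => ?_)
  · have h1 := abs_le.1 (hq a le_rfl)
    have h2 := abs_le.1 (hq _ hT)
    have h3 : ρ * (a + (2 * δ + 1) / ρ) = ρ * a + (2 * δ + 1) := by field_simp
    linarith
  · have hta : a ≤ t := ht.1.le
    have hgt := hg t (ha0.trans hta)
    have hxp := hgt.pos
    have h1 := ht3 t (ha3.trans hta)
    have h2 := hE t (ha0.trans hta)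
    have hεx := (hc t (ha1.trans hta)).le
    have hsq : ε ^ 2 ≤ x t ^ 2 := by gcongr
    have hpw : ε ^ (p - 1) ≤ x t ^ (p - 1) := Real.rpow_le_rpow hε.le hεx hp1.le
    have hX0 : 0 ≤ x t ^ (p - 1) * x t ^ 2 := by positivity
    have hhalf := S.half t (ha0.trans hta)
    unfold energy at h2
    rw [rpow_add_one_eq hxp] at h2
    rw [rpow_eq_sub_one_mul hxp]
    set X := x t ^ (p - 1)
    have h3 : 2 * ρ * x t ^ 2 ≤ k t * (X * x t ^ 2) * ((p - 1) / (p + 1)) := by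
      have e1 : 2 * ρ * x t ^ 2 = 1 / 2 * (ε ^ (p - 1) * x t ^ 2) * ((p - 1) / (p + 1)) := by
        rw [hρ]; field_simp; ring
      rw [e1]
      have : 0 ≤ (p - 1) / (p + 1) := by positivity
      gcongr
    have h4 : k t * (X * x t ^ 2) * ((p - 1) / (p + 1))
        = k t * (X * x t ^ 2) - 2 * (k t * (X * x t ^ 2 / (p + 1))) := by
      field_simp; ring
    have h5 : ρ * ε ^ 2 ≤ ρ * x t ^ 2 := by gcongr
    have h6 : ρ ≤ (y t ^ 2 - (δ ^ 2 * x t ^ 2 - k t * (X * x t ^ 2))) / x t ^ 2 := by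
      rw [le_div_iff₀ (by positivity)]
      nlinarith
    have h7 : -(((δ ^ 2 * x t - k t * (X * x t)) * x t - y t * y t) / x t ^ 2) - ρ * 1
        = (y t ^ 2 - (δ ^ 2 * x t ^ 2 - k t * (X * x t ^ 2))) / x t ^ 2 - ρ := by ring
    rw [h7]
    linarith

/-- The shooting argument, along the family of solutions starting at rest at time `t0`. -/
theorem exists_orbit (S : Setup δ p ℓ M m b c t0 k k') :
    ∃ x y : ℝ → ℝ, (∀ t ≥ t0, GoodAt δ p M k k' x y t) ∧
      (∀ t1, ∃ t ≥ t1, b ≤ x t) ∧ (∀ ε > 0, ∀ t1, ∃ t ≥ t1, x t ≤ ε) := by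
  have hm := S.m_pos
  have hδ := S.hδ
  have hp := S.hp
  have hb := S.hb
  have hM := S.hM
  have hc := S.hc
  obtain ⟨K, hK⟩ := S.lipschitz
  obtain ⟨L, hL⟩ := S.bounded
  have hFc : ∀ z, Continuous fun t => truncField δ p M k t z := by
    intro z
    have := S.k_continuous
    unfold truncField
    fun_prop
  choose Z hZ0 hZ using fun h : ℝ => exists_global_solution hFc hL hK t0 ((h, 0) : ℝ × ℝ)
  have hflow : Continuous fun q : ℝ × ℝ => Z q.1 (max q.2 t0) :=
    continuous_flow hK (γ := fun h => ((h, 0) : ℝ × ℝ)) (by fun_prop) hZ0 hZ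
  set E : ℝ → ℝ → ℝ := fun h t => energy δ p (k t) (Z h t).1 (Z h t).2 with hE
  have hEc : Continuous fun q : ℝ × ℝ => E q.1 (max q.2 t0) :=
    continuous_energy hp (S.k_continuous.comp (by fun_prop))
      (continuous_fst.comp hflow) (continuous_snd.comp hflow)
  have hEh : ∀ t ≥ t0, Continuous fun h => E h t := by
    intro t ht
    have : Continuous fun h => E h (max t t0) := hEc.comp (by fun_prop : Continuous fun h => (h, t))
    rwa [max_eq_left ht] at this
  set B : Set ℝ := {h | Dips δ p M k t0 (Z h)} with hB
  have hBopen : IsOpen B := by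
    rw [isOpen_iff_mem_nhds]
    rintro h ⟨t, ht, hneg, hdip⟩
    have h1 : ∀ᶠ h' in 𝓝 h, ∀ τ ∈ Icc t0 t, E h' (max τ t0) < 0 := by
      refine isCompact_Icc.eventually_forall_of_forall_eventually
        (P := fun h' τ => E h' (max τ t0) < 0) fun τ hτ => ?_
      refine hEc.continuousAt.eventually (gt_mem_nhds ?_)
      simp only [max_eq_left hτ.1]
      exact hneg τ hτ
    have h2 : ∀ᶠ h' in 𝓝 h, E h' t + M ^ (p + 1) / (p + 1) * (1 - k t) < 0 :=
      ((hEh t ht).add continuous_const).continuousAt.eventually (gt_mem_nhds hdip)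
    filter_upwards [h1, h2] with h' h1' h2'
    exact ⟨t, ht, fun τ hτ => by have := h1' τ hτ; rwa [max_eq_left hτ.1] at this, h2'⟩
  have hZ1 : ∀ h, (Z h t0).1 = h := fun h => by rw [hZ0]
  have hbB : b ∈ B := by
    have hE0 : E b t0 + M ^ (p + 1) / (p + 1) * (1 - k t0) < 0 := by
      have h1 := S.start
      simp only [hE, hZ0, energy]
      have h2 : k t0 * (b ^ (p + 1) / (p + 1)) ≤ b ^ (p + 1) / (p + 1) :=
        mul_le_of_le_one_left (by positivity) (S.hk1 t0).le
      rw [rpow_add_one_eq hb, S.hbp] at h2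
      rw [rpow_add_one_eq hb, S.hbp]
      have h3 : (δ ^ 2 - m ^ 2) * b ^ 2 / (p + 1) ≤ δ ^ 2 * b ^ 2 / (p + 1) := by
        have := sq_nonneg m
        gcongr
        linarith
      have h4 : δ ^ 2 * b ^ 2 * (p - 1) / (2 * (p + 1))
          = δ ^ 2 * b ^ 2 / 2 - δ ^ 2 * b ^ 2 / (p + 1) := by field_simp; ring
      linarith
    have hC0 : 0 ≤ M ^ (p + 1) / (p + 1) * (1 - k t0) :=
      mul_nonneg (by positivity) (by linarith [S.hk1 t0])
    refine ⟨t0, le_rfl, fun τ hτ => ?_, hE0⟩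
    rw [Icc_self, mem_singleton_iff] at hτ
    subst hτ
    change E b τ < 0
    linarith
  have hMB : M ∉ B := by
    rintro ⟨t, ht, hneg, -⟩
    have h1 := hneg t0 ⟨le_rfl, ht⟩
    simp only [hZ0, energy] at h1
    rw [rpow_add_one_eq hM, S.hMp] at h1
    have h2 : (p + 1) * δ ^ 2 * M ^ 2 / (p + 1) = δ ^ 2 * M ^ 2 := by field_simp
    rw [h2] at h1
    have h3 : 1 / 2 * (δ ^ 2 * M ^ 2) ≤ k t0 * (δ ^ 2 * M ^ 2) :=
      mul_le_mul_of_nonneg_right (S.half t0 le_rfl) (by positivity)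
    linarith
  set D : Set ℝ := Ici b ∩ Bᶜ with hD
  have hDc : IsClosed D := isClosed_Ici.inter hBopen.isClosed_compl
  have hDb : BddBelow D := ⟨b, fun h hh => hh.1⟩
  have hDne : D.Nonempty := ⟨M, S.b_le_M, hMB⟩
  set g := sInf D with hg
  have hgD : g ∈ D := hDc.csInf_mem hDne hDb
  have hbg : b < g := by
    rcases (mem_Ici.1 hgD.1).lt_or_eq with h | h
    · exact h
    · exact absurd hbB (by rw [h]; exact hgD.2)
  have hlow : ∀ h ∈ Ico b g, h ∈ B := by
    intro h hh
    by_contra hn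
    exact absurd (csInf_le hDb ⟨hh.1, hn⟩) (not_le.2 hh.2)
  have hgcl : g ∈ closure (Ico b g) := by
    rw [closure_Ico hbg.ne]; exact right_mem_Icc.2 hbg.le
  have hEg : ∀ t ≥ t0, E g t ≤ 0 := by
    intro t ht
    refine closure_minimal (fun h hh => ?_) (isClosed_Iic.preimage (hEh t ht)) hgcl
    exact ((S.energy_of_dips (hZ h) (by rw [hZ1]; linarith [hh.1]) (hlow h hh)).1 t ht).le
  have hgood : ∀ t ≥ t0, GoodAt δ p M k k' (fun t => (Z g t).1) (fun t => (Z g t).2) t :=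
    fun t ht => S.good_of_energy_nonpos (hZ g) (by rw [hZ1]; linarith)
      (fun s hs => hEg s hs.1) t ⟨ht, le_rfl⟩
  have hEneg : ∀ t ≥ t0, E g t < 0 := by
    intro t ht
    have h1 := S.energy_gain (a := t) fun s hs => hgood s (ht.trans hs.1)
    have h2 := (hgood (t + 3) (by linarith)).neg
    have h3 := (hgood t ht).pos
    have h4 : 0 < ((Z g t).1 * exp (-(δ * 3))) ^ (p + 1) / (p + 1) * (c * exp (-(ℓ * t))) := by
      positivity
    simp only [hE]
    linarith
  have hElow : ∀ t ≥ t0, 0 ≤ E g t + M ^ (p + 1) / (p + 1) * (1 - k t) := by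
    intro t ht
    by_contra! hn
    exact hgD.2 ⟨t, ht, fun τ hτ => hEneg τ hτ.1, hn⟩
  refine ⟨fun t => (Z g t).1, fun t => (Z g t).2, hgood, ?_,
    fun ε hε t1 => S.frequently_low hgood hElow hε t1⟩
  intro t1'
  by_contra! hcon
  set t1 := max t0 t1' with ht1
  have ht01 : t0 ≤ t1 := le_max_left _ _
  have hxb : ∀ t ≥ t1, (Z g t).1 < b := fun t ht => hcon t ((le_max_right _ _).trans ht)
  -- Remaining below `b`, the orbit has to decrease.
  have hyneg : ∀ t ≥ t1, (Z g t).2 < 0 := by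
    intro t ht
    by_contra! hn
    obtain ⟨T, hT, hTb⟩ := exists_exp_gt (A := (δ + m) * b) t
      (mul_pos hm (hgood t (ht01.trans ht)).pos) hm
    have h1 := S.growth hT (fun s hs => hgood s (ht01.trans (ht.trans hs.1)))
      (fun s hs => (hxb s (ht.trans hs.1)).le) hn
    have h2 : (δ + m) * (Z g T).1 ≤ (δ + m) * b := by
      have := (hxb T (ht.trans hT)).le
      gcongr
    linarith
  set G := (b * exp (-(δ * 3))) ^ (p + 1) / (p + 1) * c with hG
  have hG0 : 0 < G := by positivity
  set Q := δ ^ 2 / 2 * ((δ + m) * b / m) ^ 2 with hQ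
  have hmℓ : 0 < m - ℓ := by linarith [S.hℓm]
  obtain ⟨Ts, hTs, hTsb⟩ := exists_exp_gt (A := Q * exp (ℓ * t1)) t1 hG0 hmℓ
  -- A dipping orbit close to the critical one contradicts `bump_estimate`.
  have ev1 : ∀ᶠ h in 𝓝 g, ∀ τ ∈ Icc t1 Ts, (Z h (max τ t0)).2 < 0 := by
    refine isCompact_Icc.eventually_forall_of_forall_eventually
      (P := fun h τ => (Z h (max τ t0)).2 < 0) fun τ hτ => ?_
    refine (continuous_snd.comp hflow).continuousAt.eventually (gt_mem_nhds ?_)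
    simp only [Function.comp, max_eq_left (ht01.trans hτ.1)]
    exact hyneg τ hτ.1
  have ev2 : ∀ᶠ h in 𝓝 g, (Z h (max t1 t0)).1 < b := by
    have hcc : Continuous fun h => (Z h (max t1 t0)).1 :=
      (continuous_fst.comp hflow).comp (by fun_prop : Continuous fun h => (h, t1))
    refine hcc.continuousAt.eventually (gt_mem_nhds ?_)
    rw [max_eq_left ht01]
    exact hxb t1 le_rfl
  obtain ⟨h, ⟨h1, h2⟩, hh⟩ := mem_closure_iff_nhds.1 hgcl _ (ev1.and ev2)
  rw [max_eq_left ht01] at h2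
  have hZh : 0 < (Z h t0).1 := by rw [hZ1]; linarith [hh.1]
  obtain ⟨hneg, η, hη, t2, -, hEη⟩ := S.energy_of_dips (hZ h) hZh (hlow h hh)
  have hcZ : Continuous (Z h) := continuous_iff_continuousAt.2 fun t => (hZ h t).continuousAt
  obtain ⟨T, hT, hTineq⟩ := S.bump_estimate (x := fun t => (Z h t).1) (y := fun t => (Z h t).2)
    ht01 hTs
    (fun t ht => S.good_of_energy_nonpos (hZ h) hZh (fun s hs => (hneg s hs.1).le) t ⟨ht, le_rfl⟩)
    (by fun_prop) (by fun_prop) hη hEη h2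
    (fun t ht => by have := h1 t ht; rwa [max_eq_left (ht01.trans ht.1)] at this)
  have e1 : exp ((m - ℓ) * (Ts - t1)) ≤ exp ((m - ℓ) * (T - t1)) := by gcongr
  have hx2 : exp ((m - ℓ) * (T - t1)) = exp (-(ℓ * T)) * exp (m * (T - t1) + ℓ * t1) := by
    rw [← exp_add]; ring_nf
  have hx3 : exp (ℓ * t1) = exp (-(m * (T - t1))) * exp (m * (T - t1) + ℓ * t1) := by
    rw [← exp_add]; ring_nf
  have e2 : G * exp ((m - ℓ) * (T - t1))
      = (b * exp (-(δ * 3))) ^ (p + 1) / (p + 1) * (c * exp (-(ℓ * T)))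
        * exp (m * (T - t1) + ℓ * t1) := by
    rw [hx2, hG]; ring
  have e3 : Q * exp (ℓ * t1) = Q * exp (-(m * (T - t1))) * exp (m * (T - t1) + ℓ * t1) := by
    conv_lhs => rw [hx3]
    ring
  rw [← hQ] at hTineq
  have e4 := mul_le_mul_of_nonneg_right hTineq (exp_pos (m * (T - t1) + ℓ * t1)).le
  have e5 := mul_le_mul_of_nonneg_left e1 hG0.le
  linarith

end Setup

/-! ### The potentials -/

/-- The primitive vanishing at infinity of `-exp (-ℓ t) (1 + cos t)`. -/
def osc (ℓ t : ℝ) : ℝ := exp (-(ℓ * t)) * (1 / ℓ + (ℓ * cos t - sin t) / (ℓ ^ 2 + 1))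

theorem hasDerivAt_exp_neg_mul (ℓ t : ℝ) :
    HasDerivAt (fun t => exp (-(ℓ * t))) (-ℓ * exp (-(ℓ * t))) t := by
  have h : HasDerivAt (fun t => -(ℓ * t)) (-(ℓ * 1)) t := ((hasDerivAt_id t).const_mul ℓ).neg
  exact h.exp.congr_deriv (by ring)

theorem hasDerivAt_osc {ℓ : ℝ} (hℓ : 0 < ℓ) (t : ℝ) :
    HasDerivAt (osc ℓ) (-(exp (-(ℓ * t)) * (1 + cos t))) t := by
  have h1 := ((((hasDerivAt_cos t).const_mul ℓ).sub (hasDerivAt_sin t)).div_const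
    (ℓ ^ 2 + 1)).const_add (1 / ℓ)
  refine ((hasDerivAt_exp_neg_mul ℓ t).mul h1).congr_deriv ?_
  have : ℓ ^ 2 + 1 ≠ 0 := by positivity
  simp only [Pi.sub_apply]
  field_simp
  ring

theorem tendsto_exp_neg_mul {ℓ : ℝ} (hℓ : 0 < ℓ) :
    Tendsto (fun t => exp (-(ℓ * t))) atTop (𝓝 0) :=
  tendsto_exp_neg_atTop_nhds_zero.comp (tendsto_id.const_mul_atTop hℓ)

theorem tendsto_osc {ℓ : ℝ} (hℓ : 0 < ℓ) : Tendsto (osc ℓ) atTop (𝓝 0) := by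
  refine bdd_le_mul_tendsto_zero' (1 / ℓ + (ℓ + 1) / (ℓ ^ 2 + 1)) ?_ (tendsto_exp_neg_mul hℓ)
    |>.congr fun t => mul_comm _ _
  refine Eventually.of_forall fun t => ?_
  have h1 := cos_le_one t
  have h2 := neg_one_le_cos t
  have h3 := sin_le_one t
  have h4 := neg_one_le_sin t
  have h5 : |(ℓ * cos t - sin t) / (ℓ ^ 2 + 1)| ≤ (ℓ + 1) / (ℓ ^ 2 + 1) := by
    rw [abs_div, abs_of_pos (by positivity : 0 < ℓ ^ 2 + 1)]
    gcongr
    rw [abs_le]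
    constructor <;> nlinarith
  refine (abs_add_le _ _).trans ?_
  rw [abs_of_pos (by positivity : 0 < 1 / ℓ)]
  linarith

theorem osc_antitone {ℓ : ℝ} (hℓ : 0 < ℓ) : Antitone (osc ℓ) := by
  refine antitone_of_deriv_nonpos (fun t => (hasDerivAt_osc hℓ t).differentiableAt) fun t => ?_
  rw [(hasDerivAt_osc hℓ t).deriv]
  have := neg_one_le_cos t
  have := exp_pos (-(ℓ * t))
  have : 0 ≤ exp (-(ℓ * t)) * (1 + cos t) := mul_nonneg this.le (by linarith)
  linarith

/-- An interval of length `3` always meets a good part of the support of `1 + cos`, since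
`3 + sin (t + 3) - sin t ≥ 1`. -/
theorem osc_increment {ℓ : ℝ} (hℓ : 0 < ℓ) (t : ℝ) :
    osc ℓ (t + 3) + exp (-(ℓ * (t + 3))) ≤ osc ℓ t := by
  have h := le_of_deriv_nonneg (a := t) (b := t + 3)
    (f := fun τ => -osc ℓ τ - exp (-(ℓ * (t + 3))) * (τ + sin τ))
    (f' := fun τ => -(-(exp (-(ℓ * τ)) * (1 + cos τ))) - exp (-(ℓ * (t + 3))) * (1 + cos τ))
    (by linarith)
    (fun τ _ => (hasDerivAt_osc hℓ τ).neg.sub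
      (((hasDerivAt_id τ).add (hasDerivAt_sin τ)).const_mul _)) ?_
  · have h1 : exp (-(ℓ * (t + 3))) * 1
        ≤ exp (-(ℓ * (t + 3))) * (3 + sin (t + 3) - sin t) := by
      gcongr
      linarith [neg_one_le_sin (t + 3), sin_le_one t]
    linarith
  · intro τ hτ
    have h1 : exp (-(ℓ * (t + 3))) ≤ exp (-(ℓ * τ)) := by
      have := hτ.2.le
      gcongr
    have h2 : 0 ≤ (exp (-(ℓ * τ)) - exp (-(ℓ * (t + 3)))) * (1 + cos τ) :=
      mul_nonneg (by linarith) (by linarith [neg_one_le_cos τ])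
    linarith

theorem osc_pos {ℓ : ℝ} (hℓ : 0 < ℓ) (t : ℝ) : 0 < osc ℓ t := by
  have h1 := (osc_antitone hℓ).le_of_tendsto (tendsto_osc hℓ) (t + 3)
  have h2 := osc_increment hℓ t
  have := exp_pos (-(ℓ * (t + 3)))
  linarith

/-- The properties of a potential `k` (with derivative `k'`) used to construct the orbit. -/
structure Potential (ℓ c : ℝ) (k k' : ℝ → ℝ) : Prop where
  hc : 0 < c
  hk : ∀ t, HasDerivAt k (k' t) t
  cont : Continuous k'
  hk' : ∀ t, 0 ≤ k' t
  hk1 : ∀ t, k t < 1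
  hlim : Tendsto k atTop (𝓝 1)
  hinc : ∀ t, k t + c * exp (-(ℓ * t)) ≤ k (t + 3)

theorem potential_of_lt {ℓ : ℝ} (hℓ : 0 < ℓ) :
    Potential ℓ (exp (-(ℓ * 3))) (fun t => 1 - osc ℓ t)
      (fun t => exp (-(ℓ * t)) * (1 + cos t)) where
  hc := exp_pos _
  hk t := ((hasDerivAt_osc hℓ t).const_sub 1).congr_deriv (neg_neg _)
  cont := by fun_prop
  hk' t := mul_nonneg (exp_pos _).le (by linarith [neg_one_le_cos t])
  hk1 t := by linarith [osc_pos hℓ t]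
  hlim := by simpa using (tendsto_osc hℓ).const_sub 1
  hinc t := by
    have h := osc_increment hℓ t
    rw [show -(ℓ * (t + 3)) = -(ℓ * 3) + -(ℓ * t) by ring, exp_add] at h
    linarith

theorem potential_of_gt {ℓ : ℝ} (hℓ : 0 < ℓ) :
    Potential ℓ ((1 - exp (-(ℓ * 3))) / ℓ)
      (fun t => 1 - exp (-(ℓ * t)) / ℓ - osc (ℓ / 2) t)
      (fun t => exp (-(ℓ * t)) + exp (-(ℓ / 2 * t)) * (1 + cos t)) where
  hc := div_pos (by have : exp (-(ℓ * 3)) < 1 := exp_lt_one_iff.2 (by linarith)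
                    linarith) hℓ
  hk t := by
    refine ((((hasDerivAt_exp_neg_mul ℓ t).div_const ℓ).const_sub 1).sub
      (hasDerivAt_osc (half_pos hℓ) t)).congr_deriv ?_
    field_simp
    ring
  cont := by fun_prop
  hk' t := add_nonneg (exp_pos _).le (mul_nonneg (exp_pos _).le (by linarith [neg_one_le_cos t]))
  hk1 t := by
    have := osc_pos (half_pos hℓ) t
    have : 0 < exp (-(ℓ * t)) / ℓ := by positivity
    linarith
  hlim := by
    simpa using (((tendsto_exp_neg_mul hℓ).div_const ℓ).const_sub 1).sub
      (tendsto_osc (half_pos hℓ))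
  hinc t := by
    have h := osc_antitone (half_pos hℓ) (by linarith : t ≤ t + 3)
    rw [show -(ℓ * (t + 3)) = -(ℓ * 3) + -(ℓ * t) by ring, exp_add]
    have : (1 - exp (-(ℓ * 3))) / ℓ * exp (-(ℓ * t))
      = exp (-(ℓ * t)) / ℓ - exp (-(ℓ * 3)) * exp (-(ℓ * t)) / ℓ := by field_simp
    linarith

/-- The admissible choice of the constants `M`, `m`, `b` and of the initial time. -/
theorem exists_setup {δ p ℓ c : ℝ} {k k' : ℝ → ℝ} (hδ : 0 < δ) (hp : 1 < p) (hℓ : 0 < ℓ)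
    (hℓδ : ℓ < δ) (P : Potential ℓ c k k') :
    ∃ M m b t0, Setup δ p ℓ M m b c t0 k k' := by
  set m := (ℓ + δ) / 2 with hm
  have hmδ : m < δ := by linarith
  have hℓm : ℓ < m := by linarith
  have hp1 : p - 1 ≠ 0 := by linarith
  have hd : 0 < δ ^ 2 - m ^ 2 := by nlinarith
  have hroot : ∀ a : ℝ, 0 < a → (a ^ (1 / (p - 1))) ^ (p - 1) = a := fun a ha => by
    rw [← rpow_mul ha.le, one_div_mul_cancel hp1, rpow_one]
  set M := ((p + 1) * δ ^ 2) ^ (1 / (p - 1)) with hM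
  set b := (δ ^ 2 - m ^ 2) ^ (1 / (p - 1)) with hb
  have hM0 : 0 < M := by positivity
  have hb0 : 0 < b := by positivity
  have hp2 : 0 < p - 1 := by linarith
  have ev1 : ∀ᶠ t in atTop, 1 / 2 < k t := P.hlim.eventually (lt_mem_nhds (by norm_num))
  have hl2 : Tendsto (fun t => M ^ (p + 1) / (p + 1) * (1 - k t)) atTop (𝓝 0) := by
    simpa using (P.hlim.const_sub 1).const_mul (M ^ (p + 1) / (p + 1))
  have ev2 : ∀ᶠ t in atTop, M ^ (p + 1) / (p + 1) * (1 - k t)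
      < δ ^ 2 * b ^ 2 * (p - 1) / (2 * (p + 1)) :=
    hl2.eventually (gt_mem_nhds (by positivity))
  obtain ⟨t0, ht0⟩ := eventually_atTop.1 (ev1.and ev2)
  exact ⟨M, m, b, t0,
    { hδ := hδ
      hp := hp
      hℓ := hℓ
      hc := P.hc
      hk := P.hk
      hk' := P.hk'
      hk1 := P.hk1
      hlim := P.hlim
      hinc := P.hinc
      half := fun t ht => (ht0 t ht).1.le
      hM := hM0
      hMp := hroot _ (by positivity)
      hℓm := hℓm
      hmδ := hmδ
      hb := hb0
      hbp := hroot _ hd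
      start := (ht0 t0 le_rfl).2 }⟩

/-! ### Back to the radial variable -/

theorem map_neg_log : map (fun r : ℝ => -log r) (𝓝[>] 0) = atTop := by
  refine le_antisymm (tendsto_neg_atBot_atTop.comp tendsto_log_nhdsGT_zero) ?_
  have h : Tendsto (fun t : ℝ => exp (-t)) atTop (𝓝[>] 0) :=
    tendsto_exp_atBot_nhdsGT.comp tendsto_neg_atTop_atBot
  calc atTop = map (fun r : ℝ => -log r) (map (fun t : ℝ => exp (-t)) atTop) := by
        rw [map_map]
        simp [Function.comp_def]
    _ ≤ _ := map_mono h

theorem liminf_neg_log {F G : ℝ → ℝ≥0∞} (h : ∀ r > 0, F r = G (-log r)) :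
    liminf F (𝓝[>] 0) = liminf G atTop := by
  rw [← map_neg_log, ← liminf_comp]
  exact liminf_congr (eventually_mem_nhdsWithin.mono h)

theorem limsup_neg_log {F G : ℝ → ℝ≥0∞} (h : ∀ r > 0, F r = G (-log r)) :
    limsup F (𝓝[>] 0) = limsup G atTop := by
  rw [← map_neg_log, ← limsup_comp]
  exact limsup_congr (eventually_mem_nhdsWithin.mono h)

theorem hasDerivAt_rpow_mul_neg_log {f : ℝ → ℝ} {f' a r : ℝ} (hr : 0 < r)
    (hf : HasDerivAt f f' (-log r)) :
    HasDerivAt (fun r => r ^ a * f (-log r)) (r ^ (a - 1) * (a * f (-log r) - f')) r := by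
  have h1 := (hasDerivAt_rpow_const (p := a) (Or.inl hr.ne')).mul
    (hf.comp r (hasDerivAt_log hr.ne').neg)
  refine h1.congr_deriv ?_
  rw [rpow_sub_one hr.ne']
  simp only [Function.comp, Pi.neg_apply]
  field_simp
  ring

theorem contDiffOn_succ_of_hasDerivAt {f f' : ℝ → ℝ} {U : Set ℝ} (hU : IsOpen U) (j : ℕ)
    (hf : ∀ r ∈ U, HasDerivAt f (f' r) r) (h : ContDiffOn ℝ j f' U) :
    ContDiffOn ℝ (j + 1) f U := by
  rw [contDiffOn_succ_iff_deriv_of_isOpen hU]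
  refine ⟨fun r hr => (hf r hr).differentiableAt.differentiableWithinAt, by simp, ?_⟩
  exact h.congr fun r hr => (hf r hr).deriv

/-- The solution `u(r) = r ^ (-δ) x(-log r)` of the radial equation, where `δ = (n - 2) / 2`
and `x` is the orbit constructed for the potential `k(t) = K(exp (-t))`. -/
theorem exists_radial {n : ℕ} (hn : 3 ≤ n) {ℓ s c : ℝ} {k k' : ℝ → ℝ} (hℓ0 : 0 < ℓ)
    (hℓ : ℓ < ((n : ℝ) - 2) / 2) (hs2 : s < 2) (P : Potential ℓ c k k') :
    ∃ R : ℝ, 0 < R ∧ ∃ u : ℝ → ℝ,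
      ContDiffOn ℝ 1 (fun r => k (-log r)) (Set.Ioo 0 R) ∧
      (∀ r ∈ Set.Ioo (0 : ℝ) R, 0 < k (-log r) ∧ k (-log r) < 1) ∧
      Tendsto (fun r => k (-log r)) (𝓝[>] (0 : ℝ)) (𝓝 1) ∧
      ContDiffOn ℝ 2 u (Set.Ioo 0 R) ∧
      (∀ r ∈ Set.Ioo (0 : ℝ) R, 0 < u r) ∧
      (∀ r ∈ Set.Ioo (0 : ℝ) R,
        deriv (deriv u) r + (((n : ℝ) - 1) / r) * deriv u r
          + k (-log r) * r ^ (-s) * u r ^ (twoStarS n s - 1) = 0) ∧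
      Filter.liminf (fun r : ℝ => ENNReal.ofReal (r ^ (((n : ℝ) - 2) / 2) * u r))
        (𝓝[>] (0 : ℝ)) = 0 ∧
      0 < Filter.limsup (fun r : ℝ => ENNReal.ofReal (r ^ (((n : ℝ) - 2) / 2) * u r))
        (𝓝[>] (0 : ℝ)) ∧
      Filter.limsup (fun r : ℝ => ENNReal.ofReal (r ^ (((n : ℝ) - 2) / 2) * u r))
        (𝓝[>] (0 : ℝ)) < ⊤ := by
  have hn3 : (3 : ℝ) ≤ n := by exact_mod_cast hn
  set δ := ((n : ℝ) - 2) / 2 with hδ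
  have hδ0 : 0 < δ := by linarith
  set p := twoStarS n s - 1 with hpdef
  have hn2 : (n : ℝ) - 2 ≠ 0 := by linarith
  -- The exponents balance because `2*(s)` is the critical one.
  have hsp : δ * p = δ + 2 - s := by
    rw [hpdef, hδ, twoStarS]
    field_simp
    ring
  have hp1 : 1 < p := by
    by_contra! h
    have : δ * p ≤ δ * 1 := by gcongr
    linarith
  obtain ⟨M, m, b, t0, S⟩ := exists_setup hδ0 hp1 hℓ0 hℓ P
  obtain ⟨x, y, hgood, hhigh, hlow⟩ := S.exists_orbit
  have hR : ∀ r ∈ Ioo (0 : ℝ) (exp (-t0)), 0 < r ∧ t0 ≤ -log r := fun r hr => by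
    have := (log_lt_iff_lt_exp hr.1).2 hr.2
    exact ⟨hr.1, by linarith⟩
  set U := Ioo (0 : ℝ) (exp (-t0)) with hU
  have hUo : IsOpen U := isOpen_Ioo
  set u : ℝ → ℝ := fun r => r ^ (-δ) * x (-log r) with hu
  set u1 : ℝ → ℝ := fun r => r ^ (-δ - 1) * (-δ * x (-log r) - y (-log r)) with hu1
  set u2 : ℝ → ℝ := fun r => r ^ (-δ - 1 - 1) *
    ((-δ - 1) * (-δ * x (-log r) - y (-log r))
      - (-δ * y (-log r) - (δ ^ 2 * x (-log r) - k (-log r) * x (-log r) ^ p))) with hu2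
  have d1 : ∀ r ∈ U, HasDerivAt u (u1 r) r := fun r hr =>
    hasDerivAt_rpow_mul_neg_log (hR r hr).1 (hgood _ (hR r hr).2).dx
  have d2 : ∀ r ∈ U, HasDerivAt u1 (u2 r) r := fun r hr =>
    hasDerivAt_rpow_mul_neg_log (f := fun t => -δ * x t - y t) (hR r hr).1
      (((hgood _ (hR r hr).2).dx.const_mul (-δ)).sub (hgood _ (hR r hr).2).dy)
  have hlog : ContinuousOn (fun r => -log r) U :=
    (continuousOn_log.mono fun r hr => (hR r hr).1.ne').neg
  have hmaps : MapsTo (fun r => -log r) U (Ici t0) := fun r hr => (hR r hr).2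
  have hxc : ContinuousOn (fun r => x (-log r)) U :=
    ContinuousOn.comp (t := Ici t0)
      (fun t ht => (hgood t ht).dx.continuousAt.continuousWithinAt) hlog hmaps
  have hyc : ContinuousOn (fun r => y (-log r)) U :=
    ContinuousOn.comp (t := Ici t0)
      (fun t ht => (hgood t ht).dy.continuousAt.continuousWithinAt) hlog hmaps
  have hkc : ContinuousOn (fun r => k (-log r)) U := S.k_continuous.comp_continuousOn hlog
  have hrc : ∀ a : ℝ, ContinuousOn (fun r : ℝ => r ^ a) U := fun a =>
    continuousOn_id.rpow_const fun r hr => Or.inl (hR r hr).1.ne'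
  have hu2c : ContinuousOn u2 U := by
    have hxp : ContinuousOn (fun r => x (-log r) ^ p) U :=
      hxc.rpow_const fun r hr => Or.inr (by linarith)
    exact (hrc (-δ - 1 - 1)).mul ((continuousOn_const.mul ((continuousOn_const.mul hxc).sub hyc)).sub
      ((continuousOn_const.mul hyc).sub ((continuousOn_const.mul hxc).sub (hkc.mul hxp))))
  have hxu : ∀ r > 0, ENNReal.ofReal (r ^ δ * u r)
      = (fun t => ENNReal.ofReal (x t)) (-log r) := fun r hr => by
    simp only [hu]
    rw [← mul_assoc, ← rpow_add hr, add_neg_cancel, rpow_zero, one_mul]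
  refine ⟨exp (-t0), exp_pos _, u, ?_, ?_, ?_, ?_, ?_, ?_, ?_, ?_, ?_⟩
  · refine contDiffOn_succ_of_hasDerivAt hUo 0
      (fun r hr => (P.hk _).comp r (hasDerivAt_log (hR r hr).1.ne').neg) ?_
    refine contDiffOn_zero.2 ((P.cont.comp_continuousOn hlog).mul ?_)
    exact (continuousOn_inv₀.mono fun r hr => (hR r hr).1.ne').neg
  · exact fun r hr => ⟨by linarith [S.half _ (hR r hr).2], P.hk1 _⟩
  · exact P.hlim.comp map_neg_log.le
  · exact contDiffOn_succ_of_hasDerivAt hUo 1 d1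
      (contDiffOn_succ_of_hasDerivAt hUo 0 d2 (contDiffOn_zero.2 hu2c))
  · exact fun r hr => mul_pos (rpow_pos_of_pos (hR r hr).1 _) (hgood _ (hR r hr).2).pos
  · intro r hr
    have hr0 := (hR r hr).1
    have hx0 := (hgood _ (hR r hr).2).pos
    have hdd : deriv (deriv u) r = u2 r := by
      have : deriv u =ᶠ[𝓝 r] u1 := by
        filter_upwards [hUo.mem_nhds hr] with q hq using (d1 q hq).deriv
      rw [this.deriv_eq, (d2 r hr).deriv]
    have hn1 : (n : ℝ) - 1 = 2 * δ + 1 := by rw [hδ]; ring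
    have hpow : r ^ (-s) * u r ^ p = r ^ (-δ - 1 - 1) * x (-log r) ^ p := by
      rw [hu, mul_rpow (by positivity) hx0.le, ← rpow_mul hr0.le, ← mul_assoc, ← rpow_add hr0]
      congr 2
      linarith
    rw [hdd, (d1 r hr).deriv, mul_assoc (k _), hpow, hn1, hu1, hu2]
    have : r ^ (-δ - 1) = r ^ (-δ - 1 - 1) * r := by
      rw [rpow_sub_one hr0.ne' (-δ - 1)]
      field_simp
    simp only [this]
    field_simp
    ring
  · rw [liminf_neg_log (G := fun t => ENNReal.ofReal (x t)) hxu, ← nonpos_iff_eq_zero]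
    refine ENNReal.le_of_forall_pos_le_add fun ε hε _ => ?_
    rw [zero_add]
    refine liminf_le_of_frequently_le' (frequently_atTop.2 fun t1 => ?_)
    obtain ⟨t, ht, hxt⟩ := hlow ε hε t1
    exact ⟨t, ht, by rw [← ENNReal.ofReal_coe_nnreal]; exact ENNReal.ofReal_le_ofReal hxt⟩
  · rw [limsup_neg_log (G := fun t => ENNReal.ofReal (x t)) hxu]
    refine (ENNReal.ofReal_pos.2 S.hb).trans_le
      (le_limsup_of_frequently_le' (frequently_atTop.2 fun t1 => ?_))
    obtain ⟨t, ht, hxt⟩ := hhigh t1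
    exact ⟨t, ht, ENNReal.ofReal_le_ofReal hxt⟩
  · rw [limsup_neg_log (G := fun t => ENNReal.ofReal (x t)) hxu]
    refine lt_of_le_of_lt (limsup_le_of_le (a := ENNReal.ofReal M) (by isBoundedDefault) ?_)
      ENNReal.ofReal_lt_top
    filter_upwards [eventually_ge_atTop t0] with t ht
    exact ENNReal.ofReal_le_ofReal (hgood t ht).le

theorem ofReal_rpow_mul_deriv {ℓ c : ℝ} {k k' : ℝ → ℝ} (P : Potential ℓ c k k') :
    ∀ r > 0, ENNReal.ofReal (r ^ (1 - ℓ) * |deriv (fun r => k (-log r)) r|)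
      = (fun t => ENNReal.ofReal (exp (ℓ * t) * k' t)) (-log r) := by
  intro r hr
  have h : HasDerivAt (fun r => k (-log r)) (k' (-log r) * -r⁻¹) r :=
    (P.hk _).comp r (hasDerivAt_log hr.ne').neg
  rw [h.deriv, abs_mul, abs_neg, abs_of_pos (inv_pos.2 hr), abs_of_nonneg (P.hk' _),
    sub_eq_add_neg, rpow_add hr, rpow_one, rpow_def_of_pos hr,
    show log r * -ℓ = ℓ * -log r by ring]
  congr 1
  field_simp

theorem exists_cos_eq_one (t1 : ℝ) : ∃ t ≥ t1, cos t = 1 := by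
  obtain ⟨j, hj⟩ := exists_nat_ge t1
  refine ⟨j * (2 * π), ?_, cos_nat_mul_two_pi j⟩
  have : (0 : ℝ) ≤ j := Nat.cast_nonneg j
  nlinarith [pi_gt_three]

theorem exists_cos_eq_neg_one (t1 : ℝ) : ∃ t ≥ t1, cos t = -1 := by
  obtain ⟨t, ht, h⟩ := exists_cos_eq_one t1
  exact ⟨t + π, by linarith [pi_pos], by rw [cos_add_pi, h]⟩

theorem stmt12 (n : ℕ) (hn : 3 ≤ n) (ℓ s : ℝ)
    (hℓ0 : 0 < ℓ) (hℓ : ℓ < min (((n : ℝ) - 2) / 2) 2)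
    (hs0 : 0 < s) (hs2 : s < 2) (hsℓ : s ≠ ℓ) :
    ∃ R : ℝ, 0 < R ∧ ∃ K u : ℝ → ℝ,
      ContDiffOn ℝ 1 K (Set.Ioo 0 R) ∧
      (∀ r ∈ Set.Ioo (0 : ℝ) R, 0 < K r ∧ K r < 1) ∧
      Tendsto K (𝓝[>] (0 : ℝ)) (𝓝 1) ∧
      ContDiffOn ℝ 2 u (Set.Ioo 0 R) ∧
      (∀ r ∈ Set.Ioo (0 : ℝ) R, 0 < u r) ∧
      (∀ r ∈ Set.Ioo (0 : ℝ) R,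
        deriv (deriv u) r + (((n : ℝ) - 1) / r) * deriv u r
          + K r * r ^ (-s) * u r ^ (twoStarS n s - 1) = 0) ∧
      Filter.liminf (fun r : ℝ => ENNReal.ofReal (r ^ (((n : ℝ) - 2) / 2) * u r))
        (𝓝[>] (0 : ℝ)) = 0 ∧
      0 < Filter.limsup (fun r : ℝ => ENNReal.ofReal (r ^ (((n : ℝ) - 2) / 2) * u r))
        (𝓝[>] (0 : ℝ)) ∧
      Filter.limsup (fun r : ℝ => ENNReal.ofReal (r ^ (((n : ℝ) - 2) / 2) * u r))
        (𝓝[>] (0 : ℝ)) < ⊤ ∧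
      (ℓ < s →
        Filter.liminf (fun r : ℝ => ENNReal.ofReal (r ^ (1 - ℓ) * |deriv K r|))
          (𝓝[>] (0 : ℝ)) = 0 ∧
        0 < Filter.limsup (fun r : ℝ => ENNReal.ofReal (r ^ (1 - ℓ) * |deriv K r|))
          (𝓝[>] (0 : ℝ)) ∧
        Filter.limsup (fun r : ℝ => ENNReal.ofReal (r ^ (1 - ℓ) * |deriv K r|))
          (𝓝[>] (0 : ℝ)) < ⊤) ∧
      (s < ℓ →
        0 < Filter.liminf (fun r : ℝ => ENNReal.ofReal (r ^ (1 - ℓ) * |deriv K r|))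
          (𝓝[>] (0 : ℝ)) ∧
        Filter.liminf (fun r : ℝ => ENNReal.ofReal (r ^ (1 - ℓ) * |deriv K r|))
          (𝓝[>] (0 : ℝ)) < ⊤ ∧
        Filter.limsup (fun r : ℝ => ENNReal.ofReal (r ^ (1 - ℓ) * |deriv K r|))
          (𝓝[>] (0 : ℝ)) = ⊤) := by
  have hℓδ := hℓ.trans_le (min_le_left _ _)
  rcases lt_or_gt_of_ne hsℓ with hlt | hlt
  · have P := potential_of_gt hℓ0
    have hF := ofReal_rpow_mul_deriv P
    obtain ⟨R, hR, u, h1, h2, h3, h4, h5, h6, h7, h8, h9⟩ := exists_radial hn hℓ0 hℓδ hs2 P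
    refine ⟨R, hR, _, u, h1, h2, h3, h4, h5, h6, h7, h8, h9,
      fun h => absurd h hlt.not_gt, fun _ => ?_⟩
    have hval : ∀ t, exp (ℓ * t) * (exp (-(ℓ * t)) + exp (-(ℓ / 2 * t)) * (1 + cos t))
        = 1 + exp (ℓ / 2 * t) * (1 + cos t) := fun t => by
      rw [mul_add, ← mul_assoc, ← exp_add, ← exp_add, add_neg_cancel, exp_zero,
        show ℓ * t + -(ℓ / 2 * t) = ℓ / 2 * t by ring]
    set G : ℝ → ℝ≥0∞ := fun t =>
      ENNReal.ofReal (exp (ℓ * t) * (exp (-(ℓ * t)) + exp (-(ℓ / 2 * t)) * (1 + cos t))) with hG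
    rw [liminf_neg_log (G := G) hF, limsup_neg_log (G := G) hF]
    simp only [hG, hval]
    refine ⟨?_, ?_, ?_⟩
    · refine one_pos.trans_le (le_liminf_of_le (a := 1) (by isBoundedDefault)
        (Eventually.of_forall fun t => ?_))
      rw [← ENNReal.ofReal_one]
      refine ENNReal.ofReal_le_ofReal (le_add_of_nonneg_right ?_)
      exact mul_nonneg (exp_pos _).le (by linarith [neg_one_le_cos t])
    · refine lt_of_le_of_lt (liminf_le_of_frequently_le' (x := 1)
        (frequently_atTop.2 fun t1 => ?_)) ENNReal.one_lt_top
      obtain ⟨t, ht, hc⟩ := exists_cos_eq_neg_one t1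
      exact ⟨t, ht, by simp [hc]⟩
    · refine ENNReal.eq_top_of_forall_nnreal_le fun q => ?_
      refine le_limsup_of_frequently_le' (frequently_atTop.2 fun t1 => ?_)
      obtain ⟨T, hT⟩ := eventually_atTop.1
        ((tendsto_exp_atTop.comp (tendsto_id.const_mul_atTop (half_pos hℓ0))).eventually_ge_atTop
          (q : ℝ))
      obtain ⟨t, ht, hc⟩ := exists_cos_eq_one (max t1 T)
      refine ⟨t, (le_max_left _ _).trans ht, ?_⟩
      rw [← ENNReal.ofReal_coe_nnreal]
      refine ENNReal.ofReal_le_ofReal ?_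
      have h := hT t ((le_max_right _ _).trans ht)
      simp only [Function.comp, id] at h
      rw [hc]
      linarith [exp_pos (ℓ / 2 * t)]
  · have P := potential_of_lt hℓ0
    have hF := ofReal_rpow_mul_deriv P
    obtain ⟨R, hR, u, h1, h2, h3, h4, h5, h6, h7, h8, h9⟩ := exists_radial hn hℓ0 hℓδ hs2 P
    refine ⟨R, hR, _, u, h1, h2, h3, h4, h5, h6, h7, h8, h9, fun _ => ?_,
      fun h => absurd h hlt.not_gt⟩
    have hval : ∀ t, exp (ℓ * t) * (exp (-(ℓ * t)) * (1 + cos t)) = 1 + cos t := fun t => by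
      rw [← mul_assoc, ← exp_add, add_neg_cancel, exp_zero, one_mul]
    set G : ℝ → ℝ≥0∞ := fun t =>
      ENNReal.ofReal (exp (ℓ * t) * (exp (-(ℓ * t)) * (1 + cos t))) with hG
    rw [liminf_neg_log (G := G) hF, limsup_neg_log (G := G) hF]
    simp only [hG, hval]
    refine ⟨?_, ?_, ?_⟩
    · rw [← nonpos_iff_eq_zero]
      refine liminf_le_of_frequently_le' (frequently_atTop.2 fun t1 => ?_)
      obtain ⟨t, ht, hc⟩ := exists_cos_eq_neg_one t1
      exact ⟨t, ht, by simp [hc]⟩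
    · refine one_pos.trans_le (le_limsup_of_frequently_le' (frequently_atTop.2 fun t1 => ?_))
      obtain ⟨t, ht, hc⟩ := exists_cos_eq_one t1
      exact ⟨t, ht, by rw [hc, ← ENNReal.ofReal_one]; exact ENNReal.ofReal_le_ofReal (by norm_num)⟩
    · refine lt_of_le_of_lt (limsup_le_of_le (a := ENNReal.ofReal 2) (by isBoundedDefault)
        (Eventually.of_forall fun t => ENNReal.ofReal_le_ofReal ?_)) ENNReal.ofReal_lt_top
      linarith [cos_le_one t]
end
end

section
/- Let 1 < q < 2* − 1 and set λ := (n−2)(2* − 1 − q)/2 > 0. For every positive periodic C² solution φ : ℝ → ℝ of φ''(t) = f(φ(t)), there exists T₀ > 0 such that the non-autonomous system V'(t) = W(t), W'(t) = f(V(t)) + μ·e^{−λt}·V(t)^q on [T₀,∞), with V > 0 on [T₀,∞), has exactly one solution (V,W) satisfying (V(t) − φ(t), W(t) − φ'(t)) → (0,0) as t → ∞. -/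
/-!
Write `Q = f'(φ)`, `G(x) = μ x^q` and `λ = 2γ`. If `V = φ + v` then `v'' = Q v + R(t, v)`, where `R`
consists of the quadratic remainder of `f` at `φ` and the perturbation `e^{-2γt} G(φ + v)`. The point
is that all solutions with `(v, v') → 0` decay at least like `e^{-γt}`, which makes `R` a small
perturbation of the linearized equation.

*Linearized equation.* There is a bounded solution `e` of `e'' = Q e` with `(e, e')` bounded away
from the origin (`Frame`): `e = φ'` if `φ` is not constant (`Prof.frame_of_periodic`), and a cosine if
`φ` is constant, because `f'(φ) = -(p - 1)(n-2)²/4 < 0` there, where `p = 2*(s) - 1`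
(`Prof.frame_of_const`). In the coordinates tangential and transversal to `(e, e')` the equation
`d'' = Q d + H` becomes triangular, and two integrations from infinity solve it for exponentially
decaying `H`, with `|d| ≤ C k e^{-γt}` when `|H| ≤ k e^{-γt}` (`Frame.lin_exists`,
`Frame.lin_bound`). No Floquet theory is needed; a possible linear growth of the second solution is
harmless because it is absorbed by the exponential.

*Existence.* As `R(t, ·)` has size `O(e^{-2γt})` and Lipschitz constant `O(e^{-γt})` on
`|v| ≤ e^{-γt}`, the linear solution operator gives a contraction on `[T, ∞)` for large `T`
(`exists_decaying`, `Prof.exists_sol`).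

*Decay of every asymptotic solution.* The energy `W²/2 - F(V)`, with `F' = f`, has exponentially
small derivative, so it is within `O(e^{-2γt})` of the energy of `φ` (`Prof.energy`). If `φ` is
constant, the energy has a nondegenerate minimum there and `v² = O(e^{-2γt})`
(`Prof.decay_const`). If `φ` is not constant, then at times congruent to a fixed `t₀` with
`φ'(t₀) ≠ 0` the point `(V, W)` lies within `O(e^{-2γt})` of the orbit of `φ`; by Gronwall it follows
a time translate of `φ` over the next period up to the same error, so that `v(t + P) - v(t)` is
`O(e^{-2γt})` for the period `P`. Since `v → 0`, summing the geometric series gives `v = O(e^{-2γt})`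
(`Prof.decay_periodic`, `periodic_increment_decay`). That `v → 0` is used here to exclude a phase
shift in the limit.

*Uniqueness.* The difference `d` of two asymptotic solutions satisfies `d'' = Q d + H` with
`|H| = O(e^{-γt}) |d|`, so `Frame.lin_bound` forces `d = 0` for large times (`eventually_zero`), and
backward uniqueness for the initial value problem, where `f` and `G` are Lipschitz on compact subsets
of `(0, ∞)`, extends this to the whole half-line (`Prof.uniq_of_decay`).
-/

open Filter Set Real
open scoped Topology

noncomputable section

/-- The critical Sobolev exponent `2* = 2n/(n-2)`. -/
def twoStar (n : ℕ) : ℝ := 2 * (n : ℝ) / ((n : ℝ) - 2)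

/-- `λ = (n-2)(2* - 1 - q)/2`. -/
def lam (n : ℕ) (q : ℝ) : ℝ := ((n : ℝ) - 2) * (twoStar n - 1 - q) / 2

/-- `f(ξ) = ((n-2)²/4) ξ - ξ^{2*(s)-1}`. -/
def fnl (n : ℕ) (s ξ : ℝ) : ℝ := (((n : ℝ) - 2) ^ 2 / 4) * ξ - ξ ^ (twoStarS n s - 1)

/-- `(V, W)` solves the transformed system on `[T₀, ∞)` with asymptotic profile `(φ, φ')`. -/
def IsCGSSol (n : ℕ) (s μ q : ℝ) (φ : ℝ → ℝ) (T₀ : ℝ) (V W : ℝ → ℝ) : Prop :=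
  (∀ t ∈ Set.Ici T₀,
    HasDerivAt V (W t) t ∧
    HasDerivAt W (fnl n s (V t) + μ * Real.exp (-(lam n q) * t) * V t ^ q) t) ∧
  (∀ t ∈ Set.Ici T₀, 0 < V t) ∧
  Tendsto (fun t : ℝ => (V t - φ t, W t - deriv φ t)) atTop (𝓝 (0, 0))

/-! ### Decay estimates for antiderivatives and a Gronwall bound -/

lemma tendsto_exp_decay {γ : ℝ} (hγ : 0 < γ) :
    Tendsto (fun t : ℝ => exp (-(γ * t))) atTop (𝓝 0) :=
  tendsto_exp_neg_atTop_nhds_zero.comp (tendsto_id.const_mul_atTop hγ)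

/-- One-sided half of `tail_bound`: adding the comparison function `-(k/γ) e^{-γt}` makes `A`
monotone. -/
lemma tail_bound_aux {A g : ℝ → ℝ} {T k γ : ℝ} (hγ : 0 < γ)
    (hA : ∀ t, T ≤ t → HasDerivAt A (g t) t)
    (hg : ∀ t, T ≤ t → |g t| ≤ k * exp (-(γ * t)))
    (hlim : Tendsto A atTop (𝓝 0)) : ∀ t, T ≤ t → A t ≤ k / γ * exp (-(γ * t)) := by
  intro t ht
  have hd : ∀ x, T ≤ x → HasDerivAt (fun x => A x - k / γ * exp (-(γ * x)))
      (g x + k * exp (-(γ * x))) x := by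
    intro x hx
    have h1 : HasDerivAt (fun x : ℝ => -(γ * x)) (-γ) x := by
      simpa using ((hasDerivAt_id' x).const_mul γ).fun_neg
    have h2 : g x + k * exp (-(γ * x)) = g x - k / γ * (exp (-(γ * x)) * -γ) := by
      field_simp
      ring
    rw [h2]
    exact (hA x hx).fun_sub (h1.exp.const_mul (k / γ))
  have hm : MonotoneOn (fun x => A x - k / γ * exp (-(γ * x))) (Ici T) := by
    refine monotoneOn_of_hasDerivWithinAt_nonneg (convex_Ici T)
      (fun y hy => (hd y hy).continuousAt.continuousWithinAt)
      (fun y hy => (hd y (interior_subset hy)).hasDerivWithinAt) ?_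
    intro y hy
    have := hg y (interior_subset hy)
    linarith [neg_abs_le (g y)]
  have hl : Tendsto (fun x => A x - k / γ * exp (-(γ * x))) atTop (𝓝 0) := by
    simpa using hlim.sub ((tendsto_exp_decay hγ).const_mul (k / γ))
  have := ge_of_tendsto hl (b := A t - k / γ * exp (-(γ * t))) (by
    filter_upwards [eventually_ge_atTop t] with y hy
    exact hm ht (show T ≤ y from ht.trans hy) hy)
  linarith

/-- A function that tends to `0` and has an exponentially small derivative is exponentially
small. -/
lemma tail_bound {A g : ℝ → ℝ} {T k γ : ℝ} (hγ : 0 < γ)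
    (hA : ∀ t, T ≤ t → HasDerivAt A (g t) t)
    (hg : ∀ t, T ≤ t → |g t| ≤ k * exp (-(γ * t)))
    (hlim : Tendsto A atTop (𝓝 0)) : ∀ t, T ≤ t → |A t| ≤ k / γ * exp (-(γ * t)) := by
  intro t ht
  have h1 := tail_bound_aux hγ hA hg hlim t ht
  have h2 := tail_bound_aux (A := fun x => -A x) (g := fun x => -g x) hγ
    (fun x hx => (hA x hx).neg) (fun x hx => by simpa using hg x hx) (by simpa using hlim.neg) t ht
  exact abs_le.2 ⟨by linarith, h1⟩

/-- The primitive that vanishes at infinity. -/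
lemma tail_exists {g : ℝ → ℝ} {T k γ : ℝ} (hγ : 0 < γ) (hc : Continuous g)
    (hg : ∀ t, T ≤ t → |g t| ≤ k * exp (-(γ * t))) :
    ∃ A : ℝ → ℝ, (∀ t, HasDerivAt A (g t) t) ∧ Tendsto A atTop (𝓝 0) := by
  have hi : MeasureTheory.IntegrableOn g (Ioi 0) := by
    refine integrable_of_isBigO_exp_neg hγ hc.continuousOn ?_
    refine Asymptotics.IsBigO.of_bound k ?_
    filter_upwards [eventually_ge_atTop T] with t ht
    simpa [abs_of_pos (exp_pos _)] using hg t ht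
  refine ⟨fun t => (∫ x in (0:ℝ)..t, g x) - ∫ x in Ioi 0, g x, fun t => ?_, ?_⟩
  · exact (intervalIntegral.integral_hasDerivAt_right (hc.intervalIntegrable _ _)
      (hc.stronglyMeasurableAtFilter _ _) hc.continuousAt).sub_const _
  · have := MeasureTheory.intervalIntegral_tendsto_integral_Ioi 0 hi tendsto_id
    simpa using this.sub_const (∫ x in Ioi 0, g x)

/-- Gronwall's inequality for a second-order scalar equation `x'' = h` with
`|h| ≤ L |x| + c`. -/
lemma gron {x y h : ℝ → ℝ} {a b L c : ℝ} (hL : 0 ≤ L) (hc : 0 ≤ c)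
    (hx : ∀ t ∈ Icc a b, HasDerivAt x (y t) t) (hy : ∀ t ∈ Icc a b, HasDerivAt y (h t) t)
    (hh : ∀ t ∈ Icc a b, |h t| ≤ L * |x t| + c) (hxa : |x a| ≤ c) (hya : |y a| ≤ c) :
    ∀ t ∈ Icc a b, |x t| ≤ 2 * c * exp ((L + 1) * (t - a)) ∧
      |y t| ≤ 2 * c * exp ((L + 1) * (t - a)) := by
  intro t ht
  have hd : ∀ t ∈ Icc a b, HasDerivAt (fun t => (x t, y t)) (y t, h t) t :=
    fun t ht => (hx t ht).prodMk (hy t ht)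
  have key := norm_le_gronwallBound_of_norm_deriv_right_le (f := fun t => (x t, y t))
    (f' := fun t => (y t, h t)) (δ := c) (K := L + 1) (ε := c) (a := a) (b := b)
    (fun t ht => (hd t ht).continuousAt.continuousWithinAt)
    (fun t ht => (hd t (Ico_subset_Icc_self ht)).hasDerivWithinAt)
    (by simp only [Prod.norm_def, Real.norm_eq_abs]; exact max_le hxa hya)
    (by
      intro s hs
      have h1 := hh s (Ico_subset_Icc_self hs)
      simp only [Prod.norm_def, Real.norm_eq_abs]
      have h2 := le_max_left |x s| |y s|
      have h3 := le_max_right |x s| |y s|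
      have h0 := abs_nonneg (x s)
      refine max_le ?_ ?_ <;> nlinarith) t ht
  rw [gronwallBound_of_K_ne_0 (by positivity)] at key
  have h1 : c / (L + 1) * (exp ((L + 1) * (t - a)) - 1) ≤ c * exp ((L + 1) * (t - a)) := by
    have : c / (L + 1) ≤ c := div_le_self hc (by linarith)
    have h2 : 1 ≤ exp ((L + 1) * (t - a)) :=
      one_le_exp (mul_nonneg (by linarith) (by linarith [ht.1]))
    nlinarith
  simp only [Prod.norm_def, Real.norm_eq_abs] at key
  have h2 := le_max_left |x t| |y t|
  have h3 := le_max_right |x t| |y t|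
  constructor <;> linarith

lemma gron_zero {x y h : ℝ → ℝ} {a b L : ℝ} (hL : 0 ≤ L)
    (hx : ∀ t ∈ Icc a b, HasDerivAt x (y t) t) (hy : ∀ t ∈ Icc a b, HasDerivAt y (h t) t)
    (hh : ∀ t ∈ Icc a b, |h t| ≤ L * |x t|) (hxa : x a = 0) (hya : y a = 0) :
    ∀ t ∈ Icc a b, x t = 0 ∧ y t = 0 := by
  intro t ht
  simpa using gron hL le_rfl hx hy (by simpa using hh) (by simp [hxa]) (by simp [hya]) t ht

/-- Backward version of `gron_zero`, obtained by reversing time. -/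
lemma gron_zero_back {x y h : ℝ → ℝ} {a b L : ℝ} (hL : 0 ≤ L)
    (hx : ∀ t ∈ Icc a b, HasDerivAt x (y t) t) (hy : ∀ t ∈ Icc a b, HasDerivAt y (h t) t)
    (hh : ∀ t ∈ Icc a b, |h t| ≤ L * |x t|) (hxb : x b = 0) (hyb : y b = 0) :
    ∀ t ∈ Icc a b, x t = 0 ∧ y t = 0 := by
  intro t ht
  have hmem : ∀ s ∈ Icc (-b) (-a), -s ∈ Icc a b := fun s hs =>
    ⟨by linarith [hs.2], by linarith [hs.1]⟩
  have := gron_zero (x := fun s => x (-s)) (y := fun s => -y (-s)) (h := fun s => h (-s))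
    (a := -b) (b := -a) hL
    (fun s hs => by
      have := (hx _ (hmem s hs)).scomp s (hasDerivAt_neg s)
      simpa [Function.comp_def] using this)
    (fun s hs => by
      have := ((hy _ (hmem s hs)).scomp s (hasDerivAt_neg s)).fun_neg
      simpa [Function.comp_def] using this)
    (fun s hs => hh _ (hmem s hs)) (by simpa using hxb) (by simpa using hyb) (-t)
    ⟨by linarith [ht.2], by linarith [ht.1]⟩
  simpa using this

lemma tendsto_bdd_mul {x y : ℝ → ℝ} {B : ℝ} (hx : ∀ t, |x t| ≤ B)
    (hy : Tendsto y atTop (𝓝 0)) : Tendsto (fun t => x t * y t) atTop (𝓝 0) :=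
  bdd_le_mul_tendsto_zero' B (Eventually.of_forall hx) hy

/-- If `z → 0` and the increments of `z` over one period `P` are exponentially small, then `z` is
exponentially small: the increments form a convergent geometric series. -/
lemma periodic_increment_decay {z : ℝ → ℝ} {C P T lm : ℝ} (hlm : 0 < lm) (hP : 0 < P)
    (hz : Tendsto z atTop (𝓝 0))
    (hinc : ∀ t, T ≤ t → |z (t + P) - z t| ≤ C * exp (-(lm * t))) :
    ∀ t, T ≤ t → |z t| ≤ C / (1 - exp (-(lm * P))) * exp (-(lm * t)) := by
  intro t ht
  have hr : 0 < 1 - exp (-(lm * P)) := by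
    have : exp (-(lm * P)) < 1 := by rw [exp_lt_one_iff]; nlinarith
    linarith
  set D := C / (1 - exp (-(lm * P))) with hD
  have hDC : D * (1 - exp (-(lm * P))) = C := by rw [hD]; field_simp
  let u : ℝ → ℝ := fun s => |z s| - D * exp (-(lm * s))
  have hu : Tendsto u atTop (𝓝 0) := by
    simpa [u] using hz.abs.sub ((tendsto_exp_decay hlm).const_mul D)
  have hstep : ∀ s, T ≤ s → u s ≤ u (s + P) := by
    intro s hs
    have h1 := hinc s hs
    have h2 : |z s| ≤ |z (s + P)| + |z (s + P) - z s| := by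
      have := abs_sub_abs_le_abs_sub (z s) (z (s + P))
      rw [abs_sub_comm] at this
      linarith
    have h3 : exp (-(lm * (s + P))) = exp (-(lm * s)) * exp (-(lm * P)) := by
      rw [← exp_add]; ring_nf
    simp only [u]
    rw [h3]
    have : C * exp (-(lm * s)) = D * exp (-(lm * s)) - D * (exp (-(lm * s)) * exp (-(lm * P))) := by
      rw [← hDC]; ring
    linarith
  have hmono : Monotone (fun k : ℕ => u (t + k * P)) := by
    refine monotone_nat_of_le_succ fun k => ?_
    have := hstep (t + k * P) (by have : 0 ≤ (k : ℝ) * P := by positivity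
                                  linarith)
    push_cast
    rwa [show t + ((k : ℝ) + 1) * P = t + k * P + P by ring]
  have hlim : Tendsto (fun k : ℕ => u (t + k * P)) atTop (𝓝 0) :=
    hu.comp (tendsto_atTop_add_const_left _ _
      (tendsto_natCast_atTop_atTop.atTop_mul_const hP))
  have := hmono.ge_of_tendsto hlim 0
  simp [u] at this
  exact this

/-! ### The linearized equation -/

/-- `e` is a bounded solution of the linear equation `e'' = Q e` (with `Q` continuous and bounded)
whose phase vector `(e, e')` stays away from the origin. Such a solution triangularizes the
first-order system of the equation `d'' = Q d + H`. -/
structure Frame (Q e e' : ℝ → ℝ) (B m : ℝ) : Prop where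
  Qc : Continuous Q
  de : ∀ t, HasDerivAt e (e' t) t
  de' : ∀ t, HasDerivAt e' (Q t * e t) t
  bQ : ∀ t, |Q t| ≤ B
  be : ∀ t, |e t| ≤ B
  be' : ∀ t, |e' t| ≤ B
  hm : 0 < m
  hB : 0 < B
  low : ∀ t, m ≤ e t ^ 2 + e' t ^ 2

namespace Frame

variable {Q e e' : ℝ → ℝ} {B m : ℝ}

/-- Coefficient coupling the transversal coordinate into the tangential one. -/
def kap (Q e e' : ℝ → ℝ) (t : ℝ) : ℝ :=
  (1 + Q t) * (e t ^ 2 - e' t ^ 2) / (e t ^ 2 + e' t ^ 2) ^ 2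

/-- Coefficient of the forcing in the tangential coordinate. -/
def bet (e e' : ℝ → ℝ) (t : ℝ) : ℝ := e' t / (e t ^ 2 + e' t ^ 2)

lemma pos (F : Frame Q e e' B m) (t : ℝ) : 0 < e t ^ 2 + e' t ^ 2 := F.hm.trans_le (F.low t)

lemma ec (F : Frame Q e e' B m) : Continuous e :=
  continuous_iff_continuousAt.2 fun t => (F.de t).continuousAt

lemma ec' (F : Frame Q e e' B m) : Continuous e' :=
  continuous_iff_continuousAt.2 fun t => (F.de' t).continuousAt

lemma kap_bound (F : Frame Q e e' B m) (t : ℝ) : |kap Q e e' t| ≤ (1 + B) / m := by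
  have hp := F.pos t
  have h1 : |1 + Q t| ≤ 1 + B := (abs_add_le _ _).trans (by simpa using F.bQ t)
  have h2 : |e t ^ 2 - e' t ^ 2| ≤ e t ^ 2 + e' t ^ 2 :=
    abs_le.2 ⟨by nlinarith [sq_nonneg (e t)], by nlinarith [sq_nonneg (e' t)]⟩
  rw [kap, abs_div, abs_mul, abs_of_pos (pow_pos hp 2), div_le_div_iff₀ (pow_pos hp 2) F.hm]
  have hB := F.hB
  calc |1 + Q t| * |e t ^ 2 - e' t ^ 2| * m
      ≤ (1 + B) * (e t ^ 2 + e' t ^ 2) * (e t ^ 2 + e' t ^ 2) := by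
        gcongr
        · exact F.hm.le
        · exact F.low t
    _ = _ := by ring

lemma div_bound (F : Frame Q e e' B m) {x : ℝ} (t : ℝ) (hx : |x| ≤ B) :
    |x / (e t ^ 2 + e' t ^ 2)| ≤ B / m := by
  rw [abs_div, abs_of_pos (F.pos t)]
  exact div_le_div₀ F.hB.le hx F.hm (F.low t)

lemma kap_cont (F : Frame Q e e' B m) : Continuous (kap Q e e') := by
  have := F.ec; have := F.ec'; have := F.Qc
  unfold kap
  exact Continuous.div (by fun_prop) (by fun_prop) fun t => (pow_pos (F.pos t) 2).ne'

lemma bet_cont (F : Frame Q e e' B m) : Continuous (bet e e') := by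
  have := F.ec; have := F.ec'
  unfold bet
  exact Continuous.div (by fun_prop) (by fun_prop) fun t => (F.pos t).ne'

lemma hasDerivAt_den (F : Frame Q e e' B m) (t : ℝ) :
    HasDerivAt (fun t => e t ^ 2 + e' t ^ 2) (2 * e t * e' t * (1 + Q t)) t := by
  refine (((F.de t).fun_pow 2).fun_add ((F.de' t).fun_pow 2)).congr_deriv ?_
  push_cast
  ring

/-- Bound for the tangential coordinate in `lin_bound`. -/
def cb (B m γ : ℝ) : ℝ := ((1 + B) / m * (B / γ) + B / m) / γ

/-- The constant in `lin_bound`. -/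
def cc (B m γ : ℝ) : ℝ := B * cb B m γ + B / m * (B / γ)

lemma cc_pos (F : Frame Q e e' B m) {γ : ℝ} (hγ : 0 < γ) : 0 < cc B m γ := by
  have := F.hB; have := F.hm
  unfold cc cb
  positivity

/-- A solution of `d'' = Q d + H` that tends to `0` is controlled by an exponentially decaying
forcing `H`. The coordinates `a = e d' - e' d` and `b = (e d + e' d') / (e² + e'²)` satisfy the
triangular system `a' = e H`, `b' = κ a + β H`. -/
lemma lin_bound (F : Frame Q e e' B m) {γ : ℝ} (hγ : 0 < γ) {T k : ℝ} {d d' H : ℝ → ℝ}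
    (hd : ∀ t, T ≤ t → HasDerivAt d (d' t) t)
    (hd' : ∀ t, T ≤ t → HasDerivAt d' (Q t * d t + H t) t)
    (hH : ∀ t, T ≤ t → |H t| ≤ k * exp (-(γ * t)))
    (l : Tendsto d atTop (𝓝 0)) (l' : Tendsto d' atTop (𝓝 0)) :
    ∀ t, T ≤ t → |d t| ≤ cc B m γ * k * exp (-(γ * t)) := by
  have hB := F.hB
  have hm := F.hm
  have ha : ∀ t, T ≤ t → |e t * d' t - e' t * d t| ≤ B * k / γ * exp (-(γ * t)) := by
    refine tail_bound (g := fun t => e t * H t) hγ (fun t ht => ?_) (fun t ht => ?_) ?_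
    · refine (((F.de t).fun_mul (hd' t ht)).fun_sub ((F.de' t).fun_mul (hd t ht))).congr_deriv ?_
      ring
    · rw [abs_mul, mul_assoc]
      exact mul_le_mul (F.be t) (hH t ht) (abs_nonneg _) hB.le
    · simpa using (tendsto_bdd_mul F.be l').sub (tendsto_bdd_mul F.be' l)
  have hb : ∀ t, T ≤ t → |(e t * d t + e' t * d' t) / (e t ^ 2 + e' t ^ 2)| ≤
      (((1 + B) / m * (B * k / γ) + B / m * k)) / γ * exp (-(γ * t)) := by
    refine tail_bound (g := fun t => kap Q e e' t * (e t * d' t - e' t * d t) + bet e e' t * H t)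
      hγ (fun t ht => ?_) (fun t ht => ?_) ?_
    · have hp := (F.pos t).ne'
      refine ((((F.de t).fun_mul (hd t ht)).fun_add ((F.de' t).fun_mul (hd' t ht))).fun_div
        (F.hasDerivAt_den t) hp).congr_deriv ?_
      simp only [kap, bet]
      field_simp
      ring
    · have h1 : |kap Q e e' t * (e t * d' t - e' t * d t)|
          ≤ (1 + B) / m * (B * k / γ * exp (-(γ * t))) := by
        rw [abs_mul]
        exact mul_le_mul (F.kap_bound t) (ha t ht) (abs_nonneg _) (by positivity)
      have h2 : |bet e e' t * H t| ≤ B / m * (k * exp (-(γ * t))) := by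
        rw [abs_mul]
        exact mul_le_mul (F.div_bound t (F.be' t)) (hH t ht) (abs_nonneg _) (by positivity)
      calc _ ≤ _ := abs_add_le _ _
        _ ≤ _ := add_le_add h1 h2
        _ = _ := by ring
    · have h1 := tendsto_bdd_mul (fun t => F.div_bound t (F.be t)) l
      have h2 := tendsto_bdd_mul (fun t => F.div_bound t (F.be' t)) l'
      have := h1.add h2
      simp only [add_zero] at this
      refine this.congr fun t => ?_
      ring
  intro t ht
  have hp := (F.pos t).ne'
  have h0 : d t = e t * ((e t * d t + e' t * d' t) / (e t ^ 2 + e' t ^ 2)) -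
      e' t / (e t ^ 2 + e' t ^ 2) * (e t * d' t - e' t * d t) := by
    field_simp
    ring
  rw [h0]
  refine (abs_sub _ _).trans ?_
  rw [abs_mul, abs_mul]
  calc _ ≤ _ := add_le_add (mul_le_mul (F.be t) (hb t ht) (abs_nonneg _) hB.le)
        (mul_le_mul (F.div_bound t (F.be' t)) (ha t ht) (abs_nonneg _) (by positivity))
    _ = _ := by unfold cc cb; ring

/-- Solvability of `d'' = Q d + H` with `(d, d') → 0` for exponentially decaying `H`. -/
lemma lin_exists (F : Frame Q e e' B m) {γ : ℝ} (hγ : 0 < γ) {T k : ℝ} {H : ℝ → ℝ}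
    (hc : Continuous H) (hH : ∀ t, T ≤ t → |H t| ≤ k * exp (-(γ * t))) :
    ∃ d d' : ℝ → ℝ, (∀ t, HasDerivAt d (d' t) t) ∧ (∀ t, HasDerivAt d' (Q t * d t + H t) t) ∧
      Tendsto d atTop (𝓝 0) ∧ Tendsto d' atTop (𝓝 0) := by
  have hB := F.hB
  have hm := F.hm
  have hgA : ∀ t, T ≤ t → |e t * H t| ≤ B * k * exp (-(γ * t)) := fun t ht => by
    rw [abs_mul, mul_assoc]
    exact mul_le_mul (F.be t) (hH t ht) (abs_nonneg _) hB.le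
  obtain ⟨a, ha, la⟩ := tail_exists (g := fun t => e t * H t) hγ (F.ec.mul hc) hgA
  have hab := tail_bound hγ (fun t _ => ha t) hgA la
  have hac : Continuous a := continuous_iff_continuousAt.2 fun t => (ha t).continuousAt
  obtain ⟨b, hb, lb⟩ := tail_exists (g := fun t => kap Q e e' t * a t + bet e e' t * H t)
    (T := T) (k := (1 + B) / m * (B * k / γ) + B / m * k) hγ
    ((F.kap_cont.mul hac).add (F.bet_cont.mul hc)) (fun t ht => by
      have h1 : |kap Q e e' t * a t| ≤ (1 + B) / m * (B * k / γ * exp (-(γ * t))) := by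
        rw [abs_mul]
        exact mul_le_mul (F.kap_bound t) (hab t ht) (abs_nonneg _) (by positivity)
      have h2 : |bet e e' t * H t| ≤ B / m * (k * exp (-(γ * t))) := by
        rw [abs_mul]
        exact mul_le_mul (F.div_bound t (F.be' t)) (hH t ht) (abs_nonneg _) (by positivity)
      calc _ ≤ _ := abs_add_le _ _
        _ ≤ _ := add_le_add h1 h2
        _ = _ := by ring)
  refine ⟨fun t => e t * b t - e' t / (e t ^ 2 + e' t ^ 2) * a t,
    fun t => e' t * b t + e t / (e t ^ 2 + e' t ^ 2) * a t, fun t => ?_, fun t => ?_, ?_, ?_⟩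
  · have hp := (F.pos t).ne'
    refine (((F.de t).fun_mul (hb t)).fun_sub
      (((F.de' t).fun_div (F.hasDerivAt_den t) hp).fun_mul (ha t))).congr_deriv ?_
    simp only [kap, bet]
    field_simp
    ring
  · have hp := (F.pos t).ne'
    refine (((F.de' t).fun_mul (hb t)).fun_add
      (((F.de t).fun_div (F.hasDerivAt_den t) hp).fun_mul (ha t))).congr_deriv ?_
    simp only [kap, bet]
    field_simp
    ring
  · simpa using (tendsto_bdd_mul F.be lb).sub
      (tendsto_bdd_mul (fun t => F.div_bound t (F.be' t)) la)
  · simpa using (tendsto_bdd_mul F.be' lb).add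
      (tendsto_bdd_mul (fun t => F.div_bound t (F.be t)) la)

end Frame

/-! ### Existence: a contraction on bounded continuous functions -/

/-- A semilinear equation `v'' = Q v + h(t, v)` whose nonlinearity is of size `e^{-2γt}` and has
Lipschitz constant `O(e^{-γt})` has a solution on `[T, ∞)` bounded by `e^{-γt}`, provided
`T` is so large that the solution operator of the linear problem yields a contraction. -/
lemma exists_decaying {Q e e' : ℝ → ℝ} {B m γ K T : ℝ} (F : Frame Q e e' B m) (hγ : 0 < γ)
    (hK : 0 ≤ K) {h : ℝ → ℝ → ℝ} (hc : Continuous fun p : ℝ × ℝ => h p.1 p.2)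
    (h0 : ∀ t x, T ≤ t → |h t x| ≤ K * exp (-(γ * t)) * exp (-(γ * t)))
    (hl : ∀ t x y, T ≤ t → |h t x - h t y| ≤ K * exp (-(γ * t)) * |x - y|)
    (hT0 : 0 ≤ T) (hT : Frame.cc B m γ * K * exp (-(γ * T)) ≤ 1 / 2) :
    ∃ v w : ℝ → ℝ, (∀ t, T ≤ t → HasDerivAt v (w t) t) ∧
      (∀ t, T ≤ t → HasDerivAt w (Q t * v t + h t (v t)) t) ∧
      Tendsto v atTop (𝓝 0) ∧ Tendsto w atTop (𝓝 0) ∧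
      ∀ t, T ≤ t → |v t| ≤ exp (-(γ * t)) := by
  have hcc := F.cc_pos hγ
  have hmono : ∀ s t : ℝ, s ≤ t → exp (-(γ * t)) ≤ exp (-(γ * s)) := fun s t hst =>
    exp_le_exp.2 (by nlinarith)
  have hone : ∀ t : ℝ, T ≤ t → exp (-(γ * t)) ≤ 1 := fun t ht =>
    (hmono 0 t (hT0.trans ht)).trans (by simp)
  have hbd : ∀ u : BoundedContinuousFunction ℝ ℝ, ∀ t, T ≤ t →
      |h t (u t)| ≤ K * exp (-(γ * t)) := fun u t ht =>
    (h0 t (u t) ht).trans (mul_le_of_le_one_right (by positivity) (hone t ht))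
  have hcu : ∀ u : BoundedContinuousFunction ℝ ℝ, Continuous fun t => h t (u t) := fun u =>
    hc.comp (continuous_id.prodMk u.continuous)
  have hex : ∀ u : BoundedContinuousFunction ℝ ℝ, _ := fun u =>
    F.lin_exists hγ (hcu u) (hbd u)
  choose d d' hd hd' ld ld' using hex
  have hdc : ∀ u, Continuous (d u) := fun u =>
    continuous_iff_continuousAt.2 fun t => (hd u t).continuousAt
  -- freezing the solution for `t < T` makes it bounded on the whole line
  let Op : BoundedContinuousFunction ℝ ℝ → BoundedContinuousFunction ℝ ℝ := fun u =>
    BoundedContinuousFunction.ofNormedAddCommGroup (fun t => d u (max t T))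
      ((hdc u).comp (continuous_id.max continuous_const)) (Frame.cc B m γ * K) (fun t => by
        have h1 := F.lin_bound hγ (fun t _ => hd u t) (fun t _ => hd' u t) (hbd u) (ld u) (ld' u)
          (max t T) (le_max_right _ _)
        rw [Real.norm_eq_abs]
        exact h1.trans (mul_le_of_le_one_right (by positivity) (hone _ (le_max_right _ _))))
  have hOp : ∀ u t, Op u t = d u (max t T) := fun u t => rfl
  have hcontr : ContractingWith (1 / 2 : NNReal) Op := by
    refine ⟨by rw [← NNReal.coe_lt_coe]; norm_num, LipschitzWith.of_dist_le_mul fun u₁ u₂ => ?_⟩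
    have hd0 : 0 ≤ dist u₁ u₂ := dist_nonneg
    push_cast
    refine (BoundedContinuousFunction.dist_le (by positivity)).2 fun t => ?_
    rw [hOp, hOp, Real.dist_eq]
    have hs := le_max_right t T
    refine (F.lin_bound (d := fun t => d u₁ t - d u₂ t) (d' := fun t => d' u₁ t - d' u₂ t)
      (H := fun t => h t (u₁ t) - h t (u₂ t)) (k := K * dist u₁ u₂) hγ
      (fun t _ => (hd u₁ t).sub (hd u₂ t))
      (fun t _ => ((hd' u₁ t).sub (hd' u₂ t)).congr_deriv (by ring)) (fun t ht => ?_)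
      (by simpa using (ld u₁).sub (ld u₂)) (by simpa using (ld' u₁).sub (ld' u₂))
      (max t T) hs).trans ?_
    · have h1 := hl t (u₁ t) (u₂ t) ht
      have h2 : |u₁ t - u₂ t| ≤ dist u₁ u₂ := by
        rw [← Real.dist_eq]; exact BoundedContinuousFunction.dist_coe_le_dist t
      calc _ ≤ _ := h1
        _ ≤ K * exp (-(γ * t)) * dist u₁ u₂ := by gcongr
        _ = _ := by ring
    · have := hmono _ _ hs
      calc _ ≤ Frame.cc B m γ * (K * dist u₁ u₂) * exp (-(γ * T)) := by gcongr
        _ = Frame.cc B m γ * K * exp (-(γ * T)) * dist u₁ u₂ := by ring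
        _ ≤ _ := by gcongr
  set u := hcontr.fixedPoint with hu
  have hfix : Op u = u := hcontr.fixedPoint_isFixedPt
  have hdu : ∀ t, T ≤ t → u t = d u t := fun t ht => by
    conv_lhs => rw [← hfix, hOp, max_eq_left ht]
  refine ⟨d u, d' u, fun t _ => hd u t, fun t ht => ?_, ld u, ld' u, fun t ht => ?_⟩
  · rw [← hdu t ht, hdu t ht]
    have := hd' u t
    rwa [hdu t ht] at this
  · -- the linear bound on `[t, ∞)` gains a second factor `e^{-γt}`
    refine (F.lin_bound (k := K * exp (-(γ * t))) hγ (fun t _ => hd u t) (fun t _ => hd' u t)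
      (fun s hs => (h0 s (u s) (ht.trans hs)).trans ?_) (ld u) (ld' u) t le_rfl).trans ?_
    · have := hmono t s hs
      gcongr
    · have := hmono T t ht
      calc _ = Frame.cc B m γ * K * exp (-(γ * t)) * exp (-(γ * t)) := by ring
        _ ≤ Frame.cc B m γ * K * exp (-(γ * T)) * exp (-(γ * t)) := by gcongr
        _ ≤ 1 * exp (-(γ * t)) := by gcongr; linarith
        _ = _ := one_mul _

/-! ### Uniqueness among exponentially decaying solutions -/

/-- If `d'' = Q d + H` with `|H| ≤ K e^{-γt} |d|` and `(d, d') → 0`, then `d` vanishes eventually: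
`sup_{[T,∞)} |d|` is at most half of itself. -/
lemma eventually_zero {Q e e' : ℝ → ℝ} {B m γ K T : ℝ} (F : Frame Q e e' B m) (hγ : 0 < γ)
    (hK : 0 ≤ K) {d d' H : ℝ → ℝ}
    (hd : ∀ t, T ≤ t → HasDerivAt d (d' t) t)
    (hd' : ∀ t, T ≤ t → HasDerivAt d' (Q t * d t + H t) t)
    (hH : ∀ t, T ≤ t → |H t| ≤ K * exp (-(γ * t)) * |d t|)
    (l : Tendsto d atTop (𝓝 0)) (l' : Tendsto d' atTop (𝓝 0)) :
    ∃ T₁, T ≤ T₁ ∧ ∀ t, T₁ ≤ t → d t = 0 := by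
  have hcc := F.cc_pos hγ
  have e1 : ∀ᶠ t in atTop, |d t| ≤ 1 := by
    have := l.abs
    rw [abs_zero] at this
    exact this.eventually_le_const one_pos
  have e2 : ∀ᶠ t : ℝ in atTop, Frame.cc B m γ * K * exp (-(γ * t)) ≤ 1 / 2 := by
    have := (tendsto_exp_decay hγ).const_mul (Frame.cc B m γ * K)
    rw [mul_zero] at this
    exact this.eventually_le_const (by norm_num)
  obtain ⟨T₁, hT₁⟩ := eventually_atTop.1 ((e1.and e2).and (eventually_ge_atTop T))
  have hTT : T ≤ T₁ := (hT₁ T₁ le_rfl).2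
  refine ⟨T₁, hTT, ?_⟩
  have key : ∀ j : ℕ, ∀ t, T₁ ≤ t → |d t| ≤ (1 / 2) ^ j := by
    intro j
    induction j with
    | zero => intro t ht; simpa using (hT₁ t ht).1.1
    | succ j ih =>
      intro t ht
      refine (F.lin_bound (T := T₁) (k := K * (1 / 2) ^ j) hγ (fun s hs => hd s (hTT.trans hs))
        (fun s hs => hd' s (hTT.trans hs)) (fun s hs => ?_) l l' t ht).trans ?_
      · calc _ ≤ _ := hH s (hTT.trans hs)
          _ ≤ K * exp (-(γ * s)) * (1 / 2) ^ j := by gcongr; exact ih s hs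
          _ = _ := by ring
      · calc _ = Frame.cc B m γ * K * exp (-(γ * t)) * (1 / 2) ^ j := by ring
          _ ≤ 1 / 2 * (1 / 2) ^ j := by gcongr; exact (hT₁ t ht).1.2
          _ = _ := by ring
  intro t ht
  have hlim : Tendsto (fun j : ℕ => (1 / 2 : ℝ) ^ j) atTop (𝓝 0) :=
    tendsto_pow_atTop_nhds_zero_of_lt_one (by norm_num) (by norm_num)
  have := ge_of_tendsto' hlim fun j => key j t ht
  exact abs_eq_zero.1 (le_antisymm this (abs_nonneg _))

/-! ### The perturbed nonlinear equation near a bounded solution -/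

/-- `φ` is a solution of `φ'' = f(φ)` whose `r`-neighbourhood has values in `[m, M]`, an interval on
which `f` is `C^{1,1}` with derivative `f'`, `F` is a primitive of `f`, and the perturbation `G` is
bounded and Lipschitz, all constants being `K`. -/
structure Prof (f f' F G φ φ' : ℝ → ℝ) (m M r K : ℝ) : Prop where
  hm : 0 < m
  hr : 0 < r
  hK : 0 < K
  mem : ∀ t x, |x| ≤ r → φ t + x ∈ Icc m M
  fc : Continuous f
  Gc : Continuous G
  Qc : Continuous fun t => f' (φ t)
  df : ∀ x ∈ Icc m M, HasDerivAt f (f' x) x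
  dF : ∀ x ∈ Icc m M, HasDerivAt F (f x) x
  lf' : ∀ x ∈ Icc m M, ∀ y ∈ Icc m M, |f' x - f' y| ≤ K * |x - y|
  lG : ∀ x ∈ Icc m M, ∀ y ∈ Icc m M, |G x - G y| ≤ K * |x - y|
  bf : ∀ x ∈ Icc m M, |f x| ≤ K
  bf' : ∀ x ∈ Icc m M, |f' x| ≤ K
  bG : ∀ x ∈ Icc m M, |G x| ≤ K
  lip : ∀ a b : ℝ, 0 < a → ∃ L, 0 ≤ L ∧ ∀ x ∈ Icc a b, ∀ y ∈ Icc a b,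
    |f x - f y| ≤ L * |x - y| ∧ |G x - G y| ≤ L * |x - y|
  dφ : ∀ t, HasDerivAt φ (φ' t) t
  dφ' : ∀ t, HasDerivAt φ' (f (φ t)) t
  bφ' : ∀ t, |φ' t| ≤ K

/-- `(V, W)` is a positive solution on `[T, ∞)` of the perturbed system, asymptotic to
`(φ, φ')`. -/
structure Sol (f G φ φ' : ℝ → ℝ) (lm T : ℝ) (V W : ℝ → ℝ) : Prop where
  dV : ∀ t, T ≤ t → HasDerivAt V (W t) t
  dW : ∀ t, T ≤ t → HasDerivAt W (f (V t) + exp (-(lm * t)) * G (V t)) t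
  pos : ∀ t, T ≤ t → 0 < V t
  lV : Tendsto (fun t => V t - φ t) atTop (𝓝 0)
  lW : Tendsto (fun t => W t - φ' t) atTop (𝓝 0)

lemma mvt_bound {g g' : ℝ → ℝ} {a b C : ℝ} (hg : ∀ x ∈ Icc a b, HasDerivAt g (g' x) x)
    (hC : ∀ x ∈ Icc a b, |g' x| ≤ C) {x y : ℝ} (hx : x ∈ Icc a b) (hy : y ∈ Icc a b) :
    |g x - g y| ≤ C * |x - y| := by
  simpa [Real.norm_eq_abs] using (convex_Icc a b).norm_image_sub_le_of_norm_hasDerivWithin_le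
    (fun x hx => (hg x hx).hasDerivWithinAt) (by simpa using hC) hy hx

namespace Prof

variable {f f' F G φ φ' : ℝ → ℝ} {m M r K : ℝ}

lemma φc (P : Prof f f' F G φ φ' m M r K) : Continuous φ :=
  continuous_iff_continuousAt.2 fun t => (P.dφ t).continuousAt

lemma φc' (P : Prof f f' F G φ φ' m M r K) : Continuous φ' :=
  continuous_iff_continuousAt.2 fun t => (P.dφ' t).continuousAt

lemma mem0 (P : Prof f f' F G φ φ' m M r K) (t : ℝ) : φ t ∈ Icc m M := by
  simpa using P.mem t 0 (by simpa using P.hr.le)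

/-- The remainder of the linearization of `f` at `φ t` has Lipschitz constant `K ρ` on the ball of
radius `ρ`. -/
lemma taylor (P : Prof f f' F G φ φ' m M r K) (t : ℝ) {ρ x y : ℝ} (hρ : ρ ≤ r)
    (hx : |x| ≤ ρ) (hy : |y| ≤ ρ) :
    |f (φ t + x) - f (φ t + y) - f' (φ t) * (x - y)| ≤ K * ρ * |x - y| := by
  have := mvt_bound (g := fun x => f (φ t + x) - f' (φ t) * x)
    (g' := fun x => f' (φ t + x) - f' (φ t)) (a := -ρ) (b := ρ) (C := K * ρ)
    (fun z hz => by
      have h1 := (P.df _ (P.mem t z ((abs_le.2 hz).trans hρ))).comp_const_add (φ t) z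
      simpa using h1.fun_sub ((hasDerivAt_id' z).const_mul (f' (φ t))))
    (fun z hz => by
      have h1 := P.lf' _ (P.mem t z ((abs_le.2 hz).trans hρ)) _ (P.mem0 t)
      refine h1.trans ?_
      have := P.hK
      rw [add_sub_cancel_left]
      gcongr
      exact abs_le.2 hz) (abs_le.1 hx) (abs_le.1 hy)
  convert this using 2
  ring

/-- Existence of a solution asymptotic to `φ` on every sufficiently late half-line. -/
lemma exists_sol (P : Prof f f' F G φ φ' m M r K) {e e' : ℝ → ℝ} {B m₀ γ : ℝ}
    (Fr : Frame (fun t => f' (φ t)) e e' B m₀) (hγ : 0 < γ) :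
    ∃ T₁, ∀ T, T₁ ≤ T → ∃ V W, Sol f G φ φ' (2 * γ) T V W := by
  have hK := P.hK
  have e1 : ∀ᶠ t : ℝ in atTop, Frame.cc B m₀ γ * (2 * K) * exp (-(γ * t)) ≤ 1 / 2 := by
    have := (tendsto_exp_decay hγ).const_mul (Frame.cc B m₀ γ * (2 * K))
    rw [mul_zero] at this
    exact this.eventually_le_const (by norm_num)
  have e2 : ∀ᶠ t : ℝ in atTop, exp (-(γ * t)) ≤ r := (tendsto_exp_decay hγ).eventually_le_const P.hr
  obtain ⟨T₁, hT₁⟩ := eventually_atTop.1 ((e1.and e2).and (eventually_ge_atTop 0))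
  refine ⟨T₁, fun T hT => ?_⟩
  obtain ⟨⟨hT1, -⟩, hT0⟩ := hT₁ T hT
  -- truncating `v` to `[-e^{-γt}, e^{-γt}]` makes the remainder estimates hold globally
  let cl : ℝ → ℝ → ℝ := fun t x => max (-exp (-(γ * t))) (min x (exp (-(γ * t))))
  have hcl : ∀ t x, |cl t x| ≤ exp (-(γ * t)) := fun t x => by
    have := exp_pos (-(γ * t))
    exact abs_le.2 ⟨le_max_left _ _, max_le (by linarith) (min_le_right _ _)⟩
  have hcll : ∀ t x y, |cl t x - cl t y| ≤ |x - y| := fun t x y => by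
    have h1 : |cl t x - cl t y| ≤ |min x (exp (-(γ * t))) - min y (exp (-(γ * t)))| := by
      simp only [cl]
      rw [max_comm, max_comm (-exp (-(γ * t)))]
      exact abs_max_sub_max_le_abs _ _ _
    exact h1.trans ((abs_min_sub_min_le_max _ _ _ _).trans (by simp))
  have hcle : ∀ t x, |x| ≤ exp (-(γ * t)) → cl t x = x := fun t x hx => by
    simp only [cl]
    rw [min_eq_left (abs_le.1 hx).2, max_eq_right (abs_le.1 hx).1]
  have hexp2 : ∀ t : ℝ, exp (-(2 * γ * t)) = exp (-(γ * t)) * exp (-(γ * t)) := fun t => by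
    rw [← exp_add]; ring_nf
  have hφc := P.φc
  have hfc := P.fc
  have hGc := P.Gc
  have hQc := P.Qc
  have hclc : Continuous fun p : ℝ × ℝ => cl p.1 p.2 := by
    simp only [cl]
    fun_prop
  obtain ⟨v, w, hv, hw, lv, lw, hb⟩ := exists_decaying (K := 2 * K) (T := T)
    (h := fun t x => f (φ t + cl t x) - f (φ t) - f' (φ t) * cl t x +
      exp (-(2 * γ * t)) * G (φ t + cl t x)) Fr hγ (by positivity)
    (by
      have h1 : Continuous fun p : ℝ × ℝ => f' (φ p.1) := hQc.comp continuous_fst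
      have h2 : Continuous fun p : ℝ × ℝ => φ p.1 + cl p.1 p.2 :=
        (hφc.comp continuous_fst).add hclc
      have h3 : Continuous fun p : ℝ × ℝ => exp (-(2 * γ * p.1)) := by fun_prop
      exact (((hfc.comp h2).sub (hfc.comp (hφc.comp continuous_fst))).sub (h1.mul hclc)).add
        (h3.mul (hGc.comp h2)))
    (fun t x ht => by
      have hE := (hT₁ t (hT.trans ht)).1.2
      have hE0 := exp_pos (-(γ * t))
      have h1 := P.taylor t hE (hcl t x) (y := 0) (by simpa using hE0.le)
      simp only [add_zero, sub_zero] at h1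
      have h2 := P.bG _ (P.mem t _ ((hcl t x).trans hE))
      rw [hexp2]
      calc _ ≤ _ := abs_add_le _ _
        _ ≤ K * exp (-(γ * t)) * exp (-(γ * t)) + exp (-(γ * t)) * exp (-(γ * t)) * K := by
          rw [abs_mul, abs_of_pos (mul_pos hE0 hE0)]
          refine add_le_add (h1.trans ?_) ?_
          · gcongr; exact hcl t x
          · gcongr
        _ = _ := by ring)
    (fun t x y ht => by
      have hE := (hT₁ t (hT.trans ht)).1.2
      have hE0 := exp_pos (-(γ * t))
      have hE1 : exp (-(γ * t)) ≤ 1 := by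
        rw [exp_le_one_iff]; nlinarith
      have h1 := P.taylor t hE (hcl t x) (hcl t y)
      have h2 := P.lG _ (P.mem t _ ((hcl t x).trans hE)) _ (P.mem t _ ((hcl t y).trans hE))
      rw [add_sub_add_left_eq_sub] at h2
      have h3 := hcll t x y
      rw [hexp2]
      calc _ = |(f (φ t + cl t x) - f (φ t + cl t y) - f' (φ t) * (cl t x - cl t y)) +
            exp (-(γ * t)) * exp (-(γ * t)) * (G (φ t + cl t x) - G (φ t + cl t y))| := by
            congr 1; ring
        _ ≤ _ := abs_add_le _ _
        _ ≤ K * exp (-(γ * t)) * |x - y| + exp (-(γ * t)) * 1 * (K * |x - y|) := by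
          rw [abs_mul, abs_of_pos (mul_pos hE0 hE0)]
          refine add_le_add (h1.trans ?_) ?_
          · gcongr
          · gcongr; exact h2.trans (by gcongr)
        _ = _ := by ring)
    hT0 hT1
  refine ⟨fun t => φ t + v t, fun t => φ' t + w t, fun t ht => (P.dφ t).add (hv t ht),
    fun t ht => ?_, fun t ht => ?_, by simpa using lv, by simpa using lw⟩
  · refine ((P.dφ' t).add (hw t ht)).congr_deriv ?_
    rw [hcle t (v t) (hb t ht)]
    ring
  · exact P.hm.trans_le (P.mem t _ ((hb t ht).trans (hT₁ t (hT.trans ht)).1.2)).1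

/-- Two exponentially decaying solutions on `[T, ∞)` agree for large times, where their difference
solves a small perturbation of the linearized equation, and hence on `[T, ∞)` by backward
uniqueness. -/
lemma uniq_of_decay (P : Prof f f' F G φ φ' m M r K) {e e' : ℝ → ℝ} {B m₀ γ T C₁ C₂ : ℝ}
    (Fr : Frame (fun t => f' (φ t)) e e' B m₀) (hγ : 0 < γ) {V₁ W₁ V₂ W₂ : ℝ → ℝ}
    (S₁ : Sol f G φ φ' (2 * γ) T V₁ W₁) (S₂ : Sol f G φ φ' (2 * γ) T V₂ W₂)
    (h₁ : ∀ᶠ t in atTop, |V₁ t - φ t| ≤ C₁ * exp (-(γ * t)))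
    (h₂ : ∀ᶠ t in atTop, |V₂ t - φ t| ≤ C₂ * exp (-(γ * t))) :
    ∀ t, T ≤ t → V₁ t = V₂ t ∧ W₁ t = W₂ t := by
  have hK := P.hK
  set C := max (max C₁ C₂) 0 with hC
  have hC0 : 0 ≤ C := le_max_right _ _
  have e1 : ∀ᶠ t : ℝ in atTop, C * exp (-(γ * t)) ≤ r := by
    have := (tendsto_exp_decay hγ).const_mul C
    rw [mul_zero] at this
    exact this.eventually_le_const P.hr
  obtain ⟨Ta, hTa⟩ := eventually_atTop.1
    ((((h₁.and h₂).and e1).and (eventually_ge_atTop 0)).and (eventually_ge_atTop T))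
  have hTTa : T ≤ Ta := (hTa Ta le_rfl).2
  have hlim : ∀ {x y z : ℝ → ℝ}, Tendsto (fun t => x t - z t) atTop (𝓝 0) →
      Tendsto (fun t => y t - z t) atTop (𝓝 0) → Tendsto (fun t => x t - y t) atTop (𝓝 0) :=
    fun h h' => by simpa using h.sub h'
  obtain ⟨Tb, hTab, hTb⟩ := eventually_zero (T := Ta) (K := K * C + K)
    (d := fun t => V₁ t - V₂ t) (d' := fun t => W₁ t - W₂ t)
    (H := fun t => (f (V₁ t) - f (V₂ t) - f' (φ t) * (V₁ t - V₂ t)) +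
      exp (-(2 * γ * t)) * (G (V₁ t) - G (V₂ t)))
    Fr hγ (by positivity)
    (fun t ht => (S₁.dV t (hTTa.trans ht)).sub (S₂.dV t (hTTa.trans ht)))
    (fun t ht => ((S₁.dW t (hTTa.trans ht)).sub (S₂.dW t (hTTa.trans ht))).congr_deriv (by ring))
    (fun t ht => by
      obtain ⟨⟨⟨⟨b1, b2⟩, hr⟩, ht0⟩, -⟩ := hTa t ht
      have hE0 := exp_pos (-(γ * t))
      have hE1 : exp (-(γ * t)) ≤ 1 := by
        rw [exp_le_one_iff]; nlinarith
      have c1 : |V₁ t - φ t| ≤ C * exp (-(γ * t)) := b1.trans (by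
        gcongr; exact (le_max_left _ _).trans (le_max_left _ _))
      have c2 : |V₂ t - φ t| ≤ C * exp (-(γ * t)) := b2.trans (by
        gcongr; exact (le_max_right _ _).trans (le_max_left _ _))
      have m1 := P.mem t _ (c1.trans hr)
      have m2 := P.mem t _ (c2.trans hr)
      have t1 := P.taylor t hr c1 c2
      have t2 := P.lG _ m1 _ m2
      simp only [add_sub_cancel, sub_sub_sub_cancel_right] at t1 t2
      have hexp2 : exp (-(2 * γ * t)) = exp (-(γ * t)) * exp (-(γ * t)) := by
        rw [← exp_add]; ring_nf
      rw [hexp2]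
      calc _ ≤ _ := abs_add_le _ _
        _ ≤ K * (C * exp (-(γ * t))) * |V₁ t - V₂ t| +
            exp (-(γ * t)) * 1 * (K * |V₁ t - V₂ t|) := by
          rw [abs_mul, abs_of_pos (mul_pos hE0 hE0)]
          gcongr
        _ = _ := by ring)
    (hlim S₁.lV S₂.lV) (hlim S₁.lW S₂.lW)
  have hTTb : T ≤ Tb := hTTa.trans hTab
  intro t ht
  -- backward uniqueness from a time at which the solutions agree
  set b := max t Tb + 1 with hb
  have hbT : Tb < b := (le_max_right t Tb).trans_lt (by linarith)
  have htb : t ≤ b := (le_max_left t Tb).trans (by linarith)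
  have hW : W₁ b - W₂ b = 0 := by
    have hd1 := (S₁.dV b (hTTb.trans hbT.le)).fun_sub (S₂.dV b (hTTb.trans hbT.le))
    have hd2 : HasDerivAt (fun t => V₁ t - V₂ t) 0 b := by
      refine (hasDerivAt_const b (0 : ℝ)).congr_of_eventuallyEq ?_
      filter_upwards [lt_mem_nhds hbT] with s hs
      exact hTb s hs.le
    exact hd1.unique hd2
  have cV₁ : ContinuousOn V₁ (Icc T b) := fun s hs => (S₁.dV s hs.1).continuousAt.continuousWithinAt
  have cV₂ : ContinuousOn V₂ (Icc T b) := fun s hs => (S₂.dV s hs.1).continuousAt.continuousWithinAt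
  have hne : (Icc T b).Nonempty := ⟨t, ht, htb⟩
  obtain ⟨p₁, hp₁, l₁⟩ := isCompact_Icc.exists_isMinOn hne cV₁
  obtain ⟨p₂, hp₂, l₂⟩ := isCompact_Icc.exists_isMinOn hne cV₂
  obtain ⟨q₁, hq₁, u₁⟩ := isCompact_Icc.exists_isMaxOn hne cV₁
  obtain ⟨q₂, hq₂, u₂⟩ := isCompact_Icc.exists_isMaxOn hne cV₂
  obtain ⟨L, hL, hlip⟩ := P.lip (min (V₁ p₁) (V₂ p₂)) (max (V₁ q₁) (V₂ q₂))
    (lt_min (S₁.pos _ hp₁.1) (S₂.pos _ hp₂.1))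
  have := gron_zero_back (x := fun t => V₁ t - V₂ t) (y := fun t => W₁ t - W₂ t) (a := T) (b := b)
    (L := L + exp (-(2 * γ * T)) * L) (by positivity)
    (fun s hs => (S₁.dV s hs.1).sub (S₂.dV s hs.1))
    (fun s hs => (S₁.dW s hs.1).sub (S₂.dW s hs.1))
    (fun s hs => by
      obtain ⟨a1, a2⟩ := hlip (V₁ s) ⟨(min_le_left _ _).trans (l₁ hs), (u₁ hs).trans (le_max_left _ _)⟩
        (V₂ s) ⟨(min_le_right _ _).trans (l₂ hs), (u₂ hs).trans (le_max_right _ _)⟩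
      have hexp : exp (-(2 * γ * s)) ≤ exp (-(2 * γ * T)) := exp_le_exp.2 (by nlinarith [hs.1])
      calc _ = |(f (V₁ s) - f (V₂ s)) + exp (-(2 * γ * s)) * (G (V₁ s) - G (V₂ s))| := by
            congr 1; ring
        _ ≤ _ := abs_add_le _ _
        _ ≤ L * |V₁ s - V₂ s| + exp (-(2 * γ * T)) * (L * |V₁ s - V₂ s|) := by
          rw [abs_mul, abs_of_pos (exp_pos _)]
          gcongr
        _ = _ := by ring)
    (hTb b hbT.le) hW t ⟨ht, htb⟩
  exact ⟨sub_eq_zero.1 this.1, sub_eq_zero.1 this.2⟩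

end Prof

/-! ### Asymptotic solutions converge exponentially -/

lemma Sol.eventually_near {f G φ φ' V W : ℝ → ℝ} {lm T δ : ℝ}
    (S : Sol f G φ φ' lm T V W) (hδ : 0 < δ) :
    ∀ᶠ t in atTop, |V t - φ t| ≤ δ ∧ |W t - φ' t| ≤ δ := by
  have h1 := S.lV.abs
  have h2 := S.lW.abs
  rw [abs_zero] at h1 h2
  exact (h1.eventually_le_const hδ).and (h2.eventually_le_const hδ)

namespace Prof

variable {f f' F G φ φ' : ℝ → ℝ} {m M r K : ℝ}

/-- The energy `W²/2 - F(V)` converges to that of the profile at the rate of the perturbation. -/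
lemma energy (P : Prof f f' F G φ φ' m M r K) {V W : ℝ → ℝ} {lm T E : ℝ} (hlm : 0 < lm)
    (S : Sol f G φ φ' lm T V W) (hE : ∀ t, φ' t ^ 2 / 2 - F (φ t) = E) :
    ∃ C, 0 ≤ C ∧ ∀ᶠ t in atTop, |W t ^ 2 / 2 - F (V t) - E| ≤ C * exp (-(lm * t)) := by
  have hK := P.hK
  obtain ⟨T₁, hT₁⟩ := eventually_atTop.1
    (((S.eventually_near P.hr).and (S.eventually_near one_pos)).and (eventually_ge_atTop T))
  have hV : ∀ t, T₁ ≤ t → V t ∈ Icc m M := fun t ht => by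
    simpa using P.mem t _ (hT₁ t ht).1.1.1
  have hW : ∀ t, T₁ ≤ t → |W t| ≤ K + 1 := fun t ht => by
    have h1 := (hT₁ t ht).1.2.2
    have h2 := P.bφ' t
    have h3 := abs_add_le (W t - φ' t) (φ' t)
    rw [sub_add_cancel] at h3
    linarith
  refine ⟨(K + 1) * K / lm, by positivity, eventually_atTop.2 ⟨T₁, ?_⟩⟩
  refine tail_bound (g := fun t => W t * (exp (-(lm * t)) * G (V t))) hlm
    (fun t ht => ?_) (fun t ht => ?_) ?_
  · have hTt := (hT₁ t ht).2
    have h1 := (((S.dW t hTt).fun_pow 2).div_const 2).fun_sub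
      ((P.dF _ (hV t ht)).comp t (S.dV t hTt))
    refine (h1.sub_const E).congr_deriv ?_
    push_cast
    ring
  · rw [abs_mul, abs_mul, abs_of_pos (exp_pos _)]
    calc |W t| * (exp (-(lm * t)) * |G (V t)|) ≤ (K + 1) * (exp (-(lm * t)) * K) := by
          gcongr
          · exact hW t ht
          · exact P.bG _ (hV t ht)
      _ = _ := by ring
  · have hF : Tendsto (fun t => F (V t) - F (φ t)) atTop (𝓝 0) := by
      refine squeeze_zero_norm' (a := fun t => K * |V t - φ t|) ?_
        (by simpa using S.lV.abs.const_mul K)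
      filter_upwards [eventually_ge_atTop T₁] with t ht
      exact mvt_bound P.dF P.bf (hV t ht) (P.mem0 t)
    have hW2 : Tendsto (fun t => W t ^ 2 / 2 - φ' t ^ 2 / 2) atTop (𝓝 0) := by
      have h1 := tendsto_bdd_mul P.bφ' S.lW
      have h2 := (S.lW.pow 2).div_const 2
      have h3 := h1.add h2
      simp only [ne_eq, OfNat.ofNat_ne_zero, not_false_eq_true, zero_pow, zero_div, add_zero] at h3
      refine h3.congr fun t => ?_
      ring
    have h := hW2.sub hF
    rw [sub_zero] at h
    refine h.congr fun t => ?_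
    rw [← hE t]
    ring

/-- Exponential convergence to a nondegenerate constant profile: there the energy has a strict
quadratic minimum. -/
lemma decay_const (P : Prof f f' F G φ φ' m M r K) {V W : ℝ → ℝ} {γ T c a : ℝ} (hγ : 0 < γ)
    (S : Sol f G φ φ' (2 * γ) T V W) (hφ : ∀ t, φ t = c) (hφ' : ∀ t, φ' t = 0)
    (hc : f c = 0) (ha : 0 < a) (hc' : f' c = -a) :
    ∃ C, ∀ᶠ t in atTop, |V t - φ t| ≤ C * exp (-(γ * t)) := by
  have hK := P.hK
  obtain ⟨C, hC, hen⟩ := P.energy (E := -F c) (by positivity) S (fun t => by simp [hφ, hφ'])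
  have hδ : 0 < min r (a / (4 * K)) := lt_min P.hr (by positivity)
  refine ⟨4 * C / a + 1, ?_⟩
  filter_upwards [hen, S.eventually_near hδ] with t h1 h2'
  have h2 := h2'.1
  have hr := h2.trans (min_le_left _ _)
  have hs := h2.trans (min_le_right _ _)
  set x := V t - φ t with hx
  have hV : V t = c + x := by rw [hx, hφ]; ring
  have hg := mvt_bound (g := fun y => F (c + y) + a / 2 * y ^ 2) (g' := fun y => f (c + y) + a * y)
    (a := -|x|) (b := |x|) (C := K * |x| * |x|)
    (fun y hy => by
      have hm := P.mem t y ((abs_le.2 hy).trans hr)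
      rw [hφ] at hm
      have e1 := (P.dF _ hm).comp_const_add c y
      refine (e1.fun_add (((hasDerivAt_id' y).fun_pow 2).const_mul (a / 2))).congr_deriv ?_
      push_cast
      ring)
    (fun y hy => by
      have h3 := P.taylor t hr (abs_le.2 hy) (y := 0) (by simp)
      simp only [hφ, add_zero, hc, hc', sub_zero] at h3
      calc _ = |f (c + y) - -a * y| := by congr 1; ring
        _ ≤ _ := h3
        _ ≤ _ := mul_le_mul_of_nonneg_left (abs_le.2 hy) (by positivity))
    (x := x) (y := 0) ⟨neg_abs_le x, le_abs_self x⟩ (by simp)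
  simp only [add_zero, sub_zero] at hg
  have h4 : K * |x| ≤ a / 4 := by
    rw [le_div_iff₀ (by positivity)] at hs
    linarith
  have h5 : K * |x| * |x| * |x| ≤ a / 4 * x ^ 2 := by
    rw [← sq_abs x]
    nlinarith [sq_nonneg |x|]
  have h6 := (abs_le.1 hg).2
  have h7 := (abs_le.1 h1).2
  rw [hV] at h7
  have h8 : x ^ 2 ≤ 4 * C / a * exp (-(2 * γ * t)) := by
    have : a * x ^ 2 ≤ 4 * C * exp (-(2 * γ * t)) := by nlinarith [sq_nonneg (W t)]
    rw [div_mul_eq_mul_div, le_div_iff₀ ha]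
    linarith
  have hexp2 : exp (-(2 * γ * t)) = exp (-(γ * t)) ^ 2 := by
    rw [sq, ← exp_add]; ring_nf
  refine abs_le_of_sq_le_sq ?_ (by positivity)
  have hD : 0 ≤ 4 * C / a := by positivity
  calc x ^ 2 ≤ _ := h8
    _ ≤ (4 * C / a + 1) ^ 2 * exp (-(γ * t)) ^ 2 := by
      rw [hexp2]
      gcongr
      nlinarith
    _ = _ := by ring

/-- Exponential convergence to a nonconstant periodic profile. The energy shows that, at times
where `φ' ≠ 0`, the solution is exponentially close to some point of the orbit of the profile. Following
the autonomous flow from that point, which is periodic, the solution changes only by an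
exponentially small amount over each period. -/
lemma decay_periodic (P : Prof f f' F G φ φ' m M r K) {V W : ℝ → ℝ} {γ T E Pd t₀ : ℝ} (hγ : 0 < γ)
    (S : Sol f G φ φ' (2 * γ) T V W) (hE : ∀ t, φ' t ^ 2 / 2 - F (φ t) = E)
    (hPd : 0 < Pd) (hφ : Function.Periodic φ Pd) (hφ' : Function.Periodic φ' Pd)
    (h0 : φ' t₀ ≠ 0) :
    ∃ C, ∀ᶠ t in atTop, |V t - φ t| ≤ C * exp (-(γ * t)) := by
  have hK := P.hK
  have hp : 0 < |φ' t₀| := abs_pos.2 h0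
  obtain ⟨C, hC, hen⟩ := P.energy (by positivity) S hE
  have hstrict : HasStrictDerivAt φ (φ' t₀) t₀ :=
    hasStrictDerivAt_of_hasDerivAt_of_continuousAt (Eventually.of_forall P.dφ)
      P.φc'.continuousAt
  have hSn : {σ | |φ' σ - φ' t₀| ≤ |φ' t₀| / 2} ∈ 𝓝 t₀ := by
    have h1 : Tendsto (fun σ => |φ' σ - φ' t₀|) (𝓝 t₀) (𝓝 0) := by
      have := ((P.φc'.sub continuous_const).abs).tendsto (x := t₀) (f := fun σ => |φ' σ - φ' t₀|)
      simpa using this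
    exact h1.eventually_le_const (by positivity)
  have him : φ '' {σ | |φ' σ - φ' t₀| ≤ |φ' t₀| / 2} ∈ 𝓝 (φ t₀) := by
    rw [← hstrict.map_nhds_eq h0]
    exact image_mem_map hSn
  obtain ⟨δ, hδ, hball⟩ := Metric.mem_nhds_iff.1 him
  have hρ : 0 < min (min r (δ / 2)) (|φ' t₀| / 2) :=
    lt_min (lt_min P.hr (by positivity)) (by positivity)
  obtain ⟨T₁, hT₁⟩ := eventually_atTop.1
    (((hen.and (S.eventually_near hρ)).and (eventually_ge_atTop T)).and (eventually_ge_atTop 0))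
  have hV : ∀ t, T₁ ≤ t → V t ∈ Icc m M := fun t ht => by
    simpa using P.mem t _
      ((hT₁ t ht).1.1.2.1.trans ((min_le_left _ _).trans (min_le_left _ _)))
  set c₂ := 2 * C / |φ' t₀| + K with hc₂
  have hc₂0 : 0 < c₂ := by positivity
  have hinc : ∀ t, T₁ + Pd ≤ t → |(V (t + Pd) - φ (t + Pd)) - (V t - φ t)| ≤
      4 * c₂ * exp ((K + 1) * (2 * Pd)) * exp (2 * γ * Pd) * exp (-(2 * γ * t)) := by
    intro t ht
    -- `s` is the last time before `t` that is congruent to `t₀` modulo the period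
    set s := t₀ + ⌊(t - t₀) / Pd⌋ * Pd with hs
    have hst : s ≤ t := by
      have := Int.floor_le ((t - t₀) / Pd)
      rw [le_div_iff₀ hPd] at this
      linarith
    have hts : t < s + Pd := by
      have := Int.lt_floor_add_one ((t - t₀) / Pd)
      rw [div_lt_iff₀ hPd] at this
      linarith
    have hφs : φ s = φ t₀ := hφ.int_mul _ t₀
    have hφs' : φ' s = φ' t₀ := hφ'.int_mul _ t₀
    have hsT : T₁ ≤ s := by linarith
    obtain ⟨⟨⟨n1, n2, n3⟩, -⟩, -⟩ := hT₁ s hsT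
    have n2' := n2.trans ((min_le_left _ _).trans (min_le_right _ _))
    have n3' := n3.trans (min_le_right _ _)
    rw [hφs] at n2'
    rw [hφs'] at n3'
    obtain ⟨σ, hσ, hσV⟩ := hball (show V s ∈ Metric.ball (φ t₀) δ by
      rw [Metric.mem_ball, Real.dist_eq]; linarith)
    have hσ' : |φ' σ - φ' t₀| ≤ |φ' t₀| / 2 := hσ
    have hsum : |φ' t₀| ≤ |W s + φ' σ| := by
      have h1 : |2 * φ' t₀| ≤ |W s + φ' σ| + (|W s - φ' t₀| + |φ' σ - φ' t₀|) := by
        calc |2 * φ' t₀| = |(W s + φ' σ) - ((W s - φ' t₀) + (φ' σ - φ' t₀))| := by congr 1; ring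
          _ ≤ |W s + φ' σ| + |(W s - φ' t₀) + (φ' σ - φ' t₀)| := abs_sub _ _
          _ ≤ _ := by gcongr; exact abs_add_le _ _
      rw [abs_mul, abs_two] at h1
      linarith
    have hWs : |W s - φ' σ| ≤ 2 * C / |φ' t₀| * exp (-(2 * γ * s)) := by
      have h1 : |W s - φ' σ| * |W s + φ' σ| ≤ 2 * (C * exp (-(2 * γ * s))) := by
        rw [← abs_mul]
        calc _ = |2 * (W s ^ 2 / 2 - F (V s) - E)| := by
              rw [← hE σ, hσV]; congr 1; ring
          _ = 2 * |W s ^ 2 / 2 - F (V s) - E| := by rw [abs_mul, abs_two]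
          _ ≤ _ := by gcongr
      rw [div_mul_eq_mul_div, le_div_iff₀ hp]
      calc _ ≤ |W s - φ' σ| * |W s + φ' σ| := by gcongr
        _ ≤ _ := h1
        _ = _ := by ring
    have hsh : ∀ τ, HasDerivAt (fun τ : ℝ => σ + (τ - s)) 1 τ := fun τ => by
      simpa using ((hasDerivAt_id' τ).sub_const s).const_add σ
    have hgr := gron (x := fun τ => V τ - φ (σ + (τ - s))) (y := fun τ => W τ - φ' (σ + (τ - s)))
      (a := s) (b := s + 2 * Pd) (L := K) (c := c₂ * exp (-(2 * γ * s))) hK.le (by positivity)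
      (fun τ hτ => by
        have h1 := (P.dφ (σ + (τ - s))).comp τ (hsh τ)
        rw [mul_one] at h1
        exact (S.dV τ (hT₁ τ (hsT.trans hτ.1)).1.2).sub h1)
      (fun τ hτ => by
        have h1 := (P.dφ' (σ + (τ - s))).comp τ (hsh τ)
        rw [mul_one] at h1
        exact (S.dW τ (hT₁ τ (hsT.trans hτ.1)).1.2).sub h1)
      (fun τ hτ => by
        have m1 := hV τ (hsT.trans hτ.1)
        have h1 := mvt_bound P.df P.bf' m1 (P.mem0 (σ + (τ - s)))
        have h2 := P.bG _ m1
        have h3 : exp (-(2 * γ * τ)) ≤ exp (-(2 * γ * s)) := exp_le_exp.2 (by nlinarith [hτ.1])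
        have h4 : K ≤ c₂ := by
          rw [hc₂]
          have : 0 ≤ 2 * C / |φ' t₀| := by positivity
          linarith
        calc _ = |(f (V τ) - f (φ (σ + (τ - s)))) + exp (-(2 * γ * τ)) * G (V τ)| := by
              congr 1; ring
          _ ≤ _ := abs_add_le _ _
          _ ≤ K * |V τ - φ (σ + (τ - s))| + exp (-(2 * γ * s)) * c₂ := by
            rw [abs_mul, abs_of_pos (exp_pos _)]
            gcongr
            exact h2.trans h4
          _ = _ := by ring)
      (by simp only [sub_self, add_zero, hσV, abs_zero]; positivity)
      (by
        simp only [sub_self, add_zero]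
        refine hWs.trans ?_
        gcongr
        rw [hc₂]
        linarith)
    have hx : ∀ τ, s ≤ τ → τ ≤ s + 2 * Pd → |V τ - φ (σ + (τ - s))| ≤
        2 * (c₂ * exp (-(2 * γ * s))) * exp ((K + 1) * (2 * Pd)) := fun τ h1 h2 => by
      refine (hgr τ ⟨h1, h2⟩).1.trans ?_
      gcongr
      linarith
    have x1 := hx t hst (by linarith)
    have x2 := hx (t + Pd) (by linarith) (by linarith)
    rw [show σ + (t + Pd - s) = σ + (t - s) + Pd by ring, hφ] at x2
    have hes : exp (-(2 * γ * s)) ≤ exp (2 * γ * Pd) * exp (-(2 * γ * t)) := by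
      rw [← exp_add]
      exact exp_le_exp.2 (by nlinarith)
    calc _ = |(V (t + Pd) - φ (σ + (t - s))) - (V t - φ (σ + (t - s)))| := by
          rw [hφ]; congr 1; ring
      _ ≤ _ := abs_sub _ _
      _ ≤ _ := add_le_add x2 x1
      _ = 4 * c₂ * exp ((K + 1) * (2 * Pd)) * exp (-(2 * γ * s)) := by ring
      _ ≤ 4 * c₂ * exp ((K + 1) * (2 * Pd)) * (exp (2 * γ * Pd) * exp (-(2 * γ * t))) := by gcongr
      _ = _ := by ring
  have hfin := periodic_increment_decay (z := fun t => V t - φ t) (lm := 2 * γ) (by positivity) hPd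
    S.lV hinc
  refine ⟨4 * c₂ * exp ((K + 1) * (2 * Pd)) * exp (2 * γ * Pd) / (1 - exp (-(2 * γ * Pd))), ?_⟩
  filter_upwards [eventually_ge_atTop (T₁ + Pd), eventually_ge_atTop 0] with t ht ht0
  refine (hfin t ht).trans (mul_le_mul_of_nonneg_left
    (exp_le_exp.2 (by nlinarith : -(2 * γ * t) ≤ -(γ * t))) ?_)
  have : exp (-(2 * γ * Pd)) ≤ 1 := by rw [exp_le_one_iff]; nlinarith
  exact div_nonneg (by positivity) (by linarith)

end Prof

/-! ### The concrete nonlinearities -/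

lemma exists_pos_le_of_periodic {g : ℝ → ℝ} {Pd : ℝ} (hPd : 0 < Pd) (hc : Continuous g)
    (hg : Function.Periodic g Pd) (hpos : ∀ t, 0 < g t) : ∃ m, 0 < m ∧ ∀ t, m ≤ g t := by
  have hcomp := hg.compact_of_continuous hPd.ne' hc
  obtain ⟨y, ⟨t, rfl⟩, hy⟩ := hcomp.exists_isLeast (range_nonempty g)
  exact ⟨g t, hpos t, fun s => hy (mem_range_self s)⟩

lemma rpow_bound_lip (a b e : ℝ) (ha : 0 < a) : ∃ L, 0 ≤ L ∧ (∀ x ∈ Icc a b, |x ^ e| ≤ L) ∧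
    ∀ x ∈ Icc a b, ∀ y ∈ Icc a b, |x ^ e - y ^ e| ≤ L * |x - y| := by
  have hb : ∀ e : ℝ, ∃ C, ∀ x ∈ Icc a b, |x ^ e| ≤ C := fun e => by
    simpa using (isCompact_Icc (a := a) (b := b)).exists_bound_of_continuousOn
      (f := fun x : ℝ => x ^ e)
      (continuousOn_id.rpow_const fun x hx => Or.inl (ha.trans_le hx.1).ne')
  obtain ⟨C₁, h₁⟩ := hb e
  obtain ⟨C₂, h₂⟩ := hb (e - 1)
  refine ⟨max (max C₁ (|e| * C₂)) 0, le_max_right _ _,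
    fun x hx => (h₁ x hx).trans ((le_max_left _ _).trans (le_max_left _ _)),
    fun x hx y hy => ?_⟩
  refine mvt_bound (g := fun x => x ^ e) (g' := fun x => e * x ^ (e - 1))
    (fun z hz => hasDerivAt_rpow_const (Or.inl (ha.trans_le hz.1).ne')) (fun z hz => ?_) hx hy
  rw [abs_mul]
  exact (mul_le_mul_of_nonneg_left (h₂ z hz) (abs_nonneg e)).trans
    ((le_max_right _ _).trans (le_max_left _ _))

/-- A positive periodic solution satisfies the standing hypotheses `Prof`. -/
lemma prof_of_periodic {A p q μ Pd : ℝ} (hA : 0 < A) (hp : 1 < p) (hq : 1 < q) (hμ : 0 < μ)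
    (hPd : 0 < Pd) {φ φ' : ℝ → ℝ} (dφ : ∀ t, HasDerivAt φ (φ' t) t)
    (dφ' : ∀ t, HasDerivAt φ' (A * φ t - φ t ^ p) t) (hpos : ∀ t, 0 < φ t)
    (hφ : Function.Periodic φ Pd) (hφ' : Function.Periodic φ' Pd) :
    ∃ m M r K, Prof (fun x => A * x - x ^ p) (fun x => A - p * x ^ (p - 1))
      (fun x => A * x ^ 2 / 2 - x ^ (p + 1) / (p + 1)) (fun x => μ * x ^ q) φ φ' m M r K := by
  have hc : Continuous φ := continuous_iff_continuousAt.2 fun t => (dφ t).continuousAt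
  have hc' : Continuous φ' := continuous_iff_continuousAt.2 fun t => (dφ' t).continuousAt
  obtain ⟨Cφ, hCφ⟩ : ∃ C, ∀ t, |φ' t| ≤ C := by
    obtain ⟨C, hC⟩ := (hφ'.isBounded_of_continuous hPd.ne' hc').exists_norm_le
    exact ⟨C, fun t => hC _ (mem_range_self t)⟩
  obtain ⟨M₀, hM₀⟩ : ∃ C, ∀ t, |φ t| ≤ C := by
    obtain ⟨C, hC⟩ := (hφ.isBounded_of_continuous hPd.ne' hc).exists_norm_le
    exact ⟨C, fun t => hC _ (mem_range_self t)⟩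
  obtain ⟨m₀, hm₀, hmφ⟩ := exists_pos_le_of_periodic hPd hc hφ hpos
  set M := M₀ + m₀ / 2 with hM
  have hmem : ∀ t x, |x| ≤ m₀ / 2 → φ t + x ∈ Icc (m₀ / 2) M := fun t x hx => by
    have h1 := abs_le.1 hx
    have h2 := abs_le.1 (hM₀ t)
    have h3 := hmφ t
    constructor <;> linarith
  have hm2 : 0 < m₀ / 2 := by positivity
  obtain ⟨C₁, c1, b1, l1⟩ := rpow_bound_lip (m₀ / 2) M (p - 1) hm2
  obtain ⟨C₂, c2, b2, l2⟩ := rpow_bound_lip (m₀ / 2) M p hm2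
  obtain ⟨C₃, c3, b3, l3⟩ := rpow_bound_lip (m₀ / 2) M q hm2
  have hM0 : 0 ≤ M := by
    have := (abs_nonneg _).trans (hM₀ 0)
    positivity
  have hCφ0 : 0 ≤ Cφ := (abs_nonneg _).trans (hCφ 0)
  have hp0 : 0 < p := by linarith
  set K := 1 + p * C₁ + μ * C₃ + A * M + C₂ + A + Cφ with hK
  have k1 : 0 ≤ p * C₁ := by positivity
  have k2 : 0 ≤ μ * C₃ := by positivity
  have k3 : 0 ≤ A * M := by positivity
  have hne : ∀ x ∈ Icc (m₀ / 2) M, x ≠ 0 := fun x hx => (hm2.trans_le hx.1).ne'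
  refine ⟨m₀ / 2, M, m₀ / 2, K, ⟨hm2, hm2, by linarith, hmem, ?_, ?_, ?_, ?_, ?_, ?_, ?_, ?_, ?_,
    ?_, ?_, dφ, dφ', fun t => (hCφ t).trans (by linarith)⟩⟩
  · exact (continuous_const.mul continuous_id).sub (continuous_id.rpow_const fun _ => Or.inr hp0.le)
  · exact continuous_const.mul (continuous_id.rpow_const fun _ => Or.inr (by linarith))
  · exact continuous_const.sub (continuous_const.mul (hc.rpow_const fun _ => Or.inr (by linarith)))
  · intro x hx
    simpa using ((hasDerivAt_id' x).const_mul A).fun_sub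
      (hasDerivAt_rpow_const (p := p) (Or.inl (hne x hx)))
  · intro x hx
    have h1 := (((hasDerivAt_id' x).fun_pow 2).const_mul A).div_const 2
    have h2 := (hasDerivAt_rpow_const (p := p + 1) (Or.inl (hne x hx))).div_const (p + 1)
    refine (h1.fun_sub h2).congr_deriv ?_
    have : p + 1 ≠ 0 := by linarith
    rw [add_sub_cancel_right, mul_div_cancel_left₀ _ this]
    push_cast
    ring
  · intro x hx y hy
    calc |A - p * x ^ (p - 1) - (A - p * y ^ (p - 1))|
        = |(-p) * (x ^ (p - 1) - y ^ (p - 1))| := by congr 1; ring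
      _ = p * |x ^ (p - 1) - y ^ (p - 1)| := by rw [abs_mul, abs_neg, abs_of_pos hp0]
      _ ≤ p * (C₁ * |x - y|) := by gcongr; exact l1 x hx y hy
      _ = p * C₁ * |x - y| := by ring
      _ ≤ K * |x - y| := by gcongr; linarith
  · intro x hx y hy
    calc |μ * x ^ q - μ * y ^ q| = μ * |x ^ q - y ^ q| := by
          rw [← mul_sub, abs_mul, abs_of_pos hμ]
      _ ≤ μ * (C₃ * |x - y|) := by gcongr; exact l3 x hx y hy
      _ = μ * C₃ * |x - y| := by ring
      _ ≤ K * |x - y| := by gcongr; linarith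
  · intro x hx
    have h1 : |A * x| ≤ A * M := by
      rw [abs_of_pos (mul_pos hA (hm2.trans_le hx.1))]
      gcongr
      exact hx.2
    exact (abs_sub _ _).trans (by linarith [b2 x hx])
  · intro x hx
    have h1 : |p * x ^ (p - 1)| ≤ p * C₁ := by
      rw [abs_mul, abs_of_pos hp0]
      gcongr
      exact b1 x hx
    have := abs_sub A (p * x ^ (p - 1))
    rw [abs_of_pos hA] at this
    linarith
  · intro x hx
    have h1 : |μ * x ^ q| ≤ μ * C₃ := by
      rw [abs_mul, abs_of_pos hμ]
      gcongr
      exact b3 x hx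
    linarith
  · intro a b ha
    obtain ⟨L₂, d2, -, e2⟩ := rpow_bound_lip a b p ha
    obtain ⟨L₃, d3, -, e3⟩ := rpow_bound_lip a b q ha
    refine ⟨A + L₂ + μ * L₃, by positivity, fun x hx y hy => ⟨?_, ?_⟩⟩
    · calc |A * x - x ^ p - (A * y - y ^ p)| = |A * (x - y) - (x ^ p - y ^ p)| := by congr 1; ring
        _ ≤ |A * (x - y)| + |x ^ p - y ^ p| := abs_sub _ _
        _ ≤ A * |x - y| + L₂ * |x - y| := by
          rw [abs_mul, abs_of_pos hA]
          gcongr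
          exact e2 x hx y hy
        _ = (A + L₂) * |x - y| := by ring
        _ ≤ _ := by
          have : 0 ≤ μ * L₃ := by positivity
          exact mul_le_mul_of_nonneg_right (by linarith) (abs_nonneg _)
    · calc |μ * x ^ q - μ * y ^ q| = μ * |x ^ q - y ^ q| := by
            rw [← mul_sub, abs_mul, abs_of_pos hμ]
        _ ≤ μ * (L₃ * |x - y|) := by gcongr; exact e3 x hx y hy
        _ = μ * L₃ * |x - y| := by ring
        _ ≤ _ := by gcongr; linarith

/-- The velocity field `(φ', f(φ))` of a nonconstant periodic orbit never vanishes, and `φ'`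
solves the linearized equation. -/
lemma Prof.frame_of_periodic {f f' F G φ φ' : ℝ → ℝ} {m M r K Pd t₀ : ℝ}
    (P : Prof f f' F G φ φ' m M r K) (hPd : 0 < Pd) (hφ : Function.Periodic φ Pd)
    (hφ' : Function.Periodic φ' Pd) (h0 : φ' t₀ ≠ 0) :
    ∃ m₀, Frame (fun t => f' (φ t)) φ' (fun t => f (φ t)) K m₀ := by
  have hpos : ∀ t, 0 < φ' t ^ 2 + f (φ t) ^ 2 := by
    intro t
    by_contra hn
    have h1 : φ' t = 0 := by nlinarith [sq_nonneg (φ' t), sq_nonneg (f (φ t))]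
    have h2 : f (φ t) = 0 := by nlinarith [sq_nonneg (φ' t), sq_nonneg (f (φ t))]
    refine h0 ?_
    have hx : ∀ τ, HasDerivAt (fun τ => φ τ - φ t) (φ' τ) τ := fun τ => (P.dφ τ).sub_const _
    have hh : ∀ τ, |f (φ τ)| ≤ K * |φ τ - φ t| := fun τ => by
      simpa [h2] using mvt_bound P.df P.bf' (P.mem0 τ) (P.mem0 t)
    rcases le_total t t₀ with h | h
    · exact (gron_zero P.hK.le (fun τ _ => hx τ) (fun τ _ => P.dφ' τ) (fun τ _ => hh τ)
        (sub_self _) h1 t₀ ⟨h, le_rfl⟩).2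
    · exact (gron_zero_back P.hK.le (fun τ _ => hx τ) (fun τ _ => P.dφ' τ) (fun τ _ => hh τ)
        (sub_self _) h1 t₀ ⟨le_rfl, h⟩).2
  obtain ⟨m₀, hm₀, hle⟩ := exists_pos_le_of_periodic hPd
    ((P.φc'.pow 2).add ((P.fc.comp P.φc).pow 2))
    (fun t => by simp only [Function.comp, Pi.add_apply, Pi.pow_apply, hφ t, hφ' t]) hpos
  exact ⟨m₀, P.Qc, P.dφ', fun t => (P.df _ (P.mem0 t)).comp t (P.dφ t), fun t => P.bf' _ (P.mem0 t),
    P.bφ', fun t => P.bf _ (P.mem0 t), hm₀, P.hK, hle⟩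

/-- When `f'(φ)` is a negative constant the linearized equation is a harmonic oscillator. -/
lemma Prof.frame_of_const {f f' F G φ φ' : ℝ → ℝ} {m M r K ω : ℝ}
    (P : Prof f f' F G φ φ' m M r K) (hω : 0 < ω) (h : ∀ t, f' (φ t) = -ω ^ 2) :
    Frame (fun t => f' (φ t)) (fun t => cos (ω * t)) (fun t => -ω * sin (ω * t))
      (ω ^ 2 + ω + 1) (min 1 (ω ^ 2)) where
  Qc := P.Qc
  de t := by
    have := ((hasDerivAt_id' t).const_mul ω).cos
    refine this.congr_deriv ?_
    ring
  de' t := by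
    have := (((hasDerivAt_id' t).const_mul ω).sin).const_mul (-ω)
    refine this.congr_deriv ?_
    rw [h]
    ring
  bQ t := by
    rw [h, abs_neg, abs_of_nonneg (sq_nonneg ω)]
    linarith
  be t := (abs_cos_le_one _).trans (by nlinarith)
  be' t := by
    rw [abs_mul, abs_neg, abs_of_pos hω]
    nlinarith [abs_sin_le_one (ω * t), sq_nonneg ω]
  hm := lt_min one_pos (by positivity)
  hB := by positivity
  low t := by
    have h1 := min_le_left 1 (ω ^ 2)
    have h2 := min_le_right 1 (ω ^ 2)
    have h3 := cos_sq_add_sin_sq (ω * t)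
    nlinarith [sq_nonneg (cos (ω * t)), sq_nonneg (sin (ω * t))]

/-- Bounded solutions of the linearized equation and exponential convergence are available around
every positive periodic profile. -/
lemma frame_and_decay {A p q μ Pd γ : ℝ} (hA : 0 < A) (hp : 1 < p) (hγ : 0 < γ) (hPd : 0 < Pd)
    {φ φ' : ℝ → ℝ} {m M r K : ℝ}
    (P : Prof (fun x => A * x - x ^ p) (fun x => A - p * x ^ (p - 1))
      (fun x => A * x ^ 2 / 2 - x ^ (p + 1) / (p + 1)) (fun x => μ * x ^ q) φ φ' m M r K)
    (hpos : ∀ t, 0 < φ t) (hφ : Function.Periodic φ Pd) (hφ' : Function.Periodic φ' Pd) :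
    (∃ e e' B m₀, Frame (fun t => A - p * φ t ^ (p - 1)) e e' B m₀) ∧
    ∀ T V W, Sol (fun x => A * x - x ^ p) (fun x => μ * x ^ q) φ φ' (2 * γ) T V W →
      ∃ C, ∀ᶠ t in atTop, |V t - φ t| ≤ C * exp (-(γ * t)) := by
  by_cases h : ∃ t₀, φ' t₀ ≠ 0
  · obtain ⟨t₀, h0⟩ := h
    obtain ⟨m₀, Fr⟩ := P.frame_of_periodic hPd hφ hφ' h0
    refine ⟨⟨_, _, _, _, Fr⟩, fun T V W S => ?_⟩
    have hd : ∀ t, HasDerivAt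
        (fun t => φ' t ^ 2 / 2 - (A * φ t ^ 2 / 2 - φ t ^ (p + 1) / (p + 1))) 0 t := fun t => by
      have h1 := (((P.dφ' t).fun_pow 2).div_const 2).fun_sub ((P.dF _ (P.mem0 t)).comp t (P.dφ t))
      refine h1.congr_deriv ?_
      push_cast
      ring
    exact P.decay_periodic hγ S
      (fun t => is_const_of_deriv_eq_zero (fun t => (hd t).differentiableAt)
        (fun t => (hd t).deriv) t 0) hPd hφ hφ' h0
  · push Not at h
    have hconst : ∀ t, φ t = φ 0 := fun t =>
      is_const_of_deriv_eq_zero (fun t => (P.dφ t).differentiableAt)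
        (fun t => (P.dφ t).deriv.trans (h t)) t 0
    have h2 : A * φ 0 - φ 0 ^ p = 0 := by
      have h3 := P.dφ' 0
      rw [funext h] at h3
      exact h3.unique (hasDerivAt_const 0 0)
    have hpow : φ 0 ^ (p - 1) = A := by
      have h3 : φ 0 ^ p = φ 0 ^ (p - 1) * φ 0 := by
        rw [← rpow_add_one (hpos 0).ne', sub_add_cancel]
      rw [h3, ← sub_mul] at h2
      have := (mul_eq_zero.1 h2).resolve_right (hpos 0).ne'
      linarith
    have ha : 0 < A * (p - 1) := mul_pos hA (by linarith)
    have hfc : A - p * φ 0 ^ (p - 1) = -(A * (p - 1)) := by rw [hpow]; ring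
    refine ⟨⟨_, _, _, _, P.frame_of_const (ω := √(A * (p - 1))) (sqrt_pos.2 ha) fun t => ?_⟩,
      fun T V W S => P.decay_const hγ S hconst h h2 ha hfc⟩
    rw [hconst t, hfc, sq_sqrt ha.le]

/-! ### Conclusion -/

lemma isCGSSol_iff {n : ℕ} {s μ q T₀ : ℝ} {φ V W : ℝ → ℝ} :
    IsCGSSol n s μ q φ T₀ V W ↔
      Sol (fnl n s) (fun x => μ * x ^ q) φ (deriv φ) (2 * (lam n q / 2)) T₀ V W := by
  have hd : ∀ t, fnl n s (V t) + μ * exp (-(lam n q) * t) * V t ^ q =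
      fnl n s (V t) + exp (-(2 * (lam n q / 2) * t)) * (μ * V t ^ q) := fun t => by
    rw [mul_div_cancel₀ _ two_ne_zero, neg_mul]
    ring
  constructor
  · rintro ⟨h1, h2, h3⟩
    rw [nhds_prod_eq] at h3
    exact ⟨fun t ht => (h1 t ht).1, fun t ht => hd t ▸ (h1 t ht).2, h2, h3.fst, h3.snd⟩
  · intro S
    exact ⟨fun t ht => ⟨S.dV t ht, (hd t).symm ▸ S.dW t ht⟩, S.pos, S.lV.prodMk_nhds S.lW⟩

theorem stmt13 (n : ℕ) (hn : 3 ≤ n) (s μ q : ℝ) (hs0 : 0 < s) (hs2 : s < 2)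
    (hμ : 0 < μ) (hq1 : 1 < q) (hq2 : q < twoStar n - 1)
    (φ : ℝ → ℝ) (hφreg : ContDiff ℝ 2 φ) (hφpos : ∀ t : ℝ, 0 < φ t)
    (hφper : ∃ T : ℝ, 0 < T ∧ Function.Periodic φ T)
    (hφode : ∀ t : ℝ, deriv (deriv φ) t = fnl n s (φ t)) :
    ∃ T₀ : ℝ, 0 < T₀ ∧
      (∃ V W : ℝ → ℝ, IsCGSSol n s μ q φ T₀ V W) ∧
      (∀ V₁ W₁ V₂ W₂ : ℝ → ℝ,
        IsCGSSol n s μ q φ T₀ V₁ W₁ → IsCGSSol n s μ q φ T₀ V₂ W₂ →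
        Set.EqOn V₁ V₂ (Set.Ici T₀) ∧ Set.EqOn W₁ W₂ (Set.Ici T₀)) := by
  obtain ⟨Pd, hPd, hφ⟩ := hφper
  have hn3 : (3 : ℝ) ≤ n := by exact_mod_cast hn
  have hn2 : (0 : ℝ) < n - 2 := by linarith
  have hγ : 0 < lam n q / 2 := by
    unfold lam
    have : 0 < twoStar n - 1 - q := by linarith
    positivity
  have hA : 0 < ((n : ℝ) - 2) ^ 2 / 4 := by positivity
  have hp : 1 < twoStarS n s - 1 := by
    have : 2 < twoStarS n s := by
      rw [twoStarS, lt_div_iff₀ hn2]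
      linarith
    linarith
  have dφ : ∀ t, HasDerivAt φ (deriv φ t) t := fun t =>
    ((hφreg.differentiable two_ne_zero) t).hasDerivAt
  have hreg' : ContDiff ℝ 1 (deriv φ) := ((contDiff_succ_iff_deriv (n := 1)).1 hφreg).2.2
  have dφ' : ∀ t, HasDerivAt (deriv φ) (fnl n s (φ t)) t := fun t => by
    rw [← hφode t]
    exact ((hreg'.differentiable one_ne_zero) t).hasDerivAt
  have hφ' : Function.Periodic (deriv φ) Pd := fun t => by
    rw [← deriv_comp_add_const]
    congr 1
    exact funext hφ
  obtain ⟨m, M, r, K, P⟩ := prof_of_periodic hA hp hq1 hμ hPd dφ dφ' hφpos hφ hφ'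
  obtain ⟨⟨e, e', B, m₀, Fr⟩, hdec⟩ := frame_and_decay hA hp hγ hPd P hφpos hφ hφ'
  obtain ⟨T₁, hT₁⟩ := P.exists_sol Fr hγ
  obtain ⟨V, W, S⟩ := hT₁ (max T₁ 1) (le_max_left _ _)
  refine ⟨max T₁ 1, lt_max_of_lt_right one_pos, ⟨V, W, isCGSSol_iff.2 S⟩, ?_⟩
  intro V₁ W₁ V₂ W₂ h₁ h₂
  have S₁ := isCGSSol_iff.1 h₁
  have S₂ := isCGSSol_iff.1 h₂
  obtain ⟨C₁, d₁⟩ := hdec _ _ _ S₁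
  obtain ⟨C₂, d₂⟩ := hdec _ _ _ S₂
  have huniq := P.uniq_of_decay Fr hγ S₁ S₂ d₁ d₂
  exact ⟨fun t ht => (huniq t ht).1, fun t ht => (huniq t ht).2⟩
end
end
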